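/- arXiv:2212.08835 — 2 statements merged into one kernel-verified Lean document; each statement's English description precedes it below -/
import Mathlib

section
/- Let g belong to the range T(LlogL(-1,1)) of the finite Hilbert transform. Then a function f ∈ LlogL(-1,1) satisfies the airfoil equation T(f) = g almost everywhere if and only if there exists a constant c ∈ ℂ such that f(x) = −(1-x²)^{-1/2}·T(t ↦ √(1-t²) g(t))(x) + c·(1-x²)^{-1/2} for a.e. x ∈ (-1,1). In particular this inversion formula holds for every g ∈ L(log L)²(-1,1). -/
open MeasureTheory Set Filter

noncomputable section

/-- Lebesgue measure restricted to the interval `(-1, 1)`. -/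
def μI : Measure ℝ := volume.restrict (Set.Ioo (-1 : ℝ) 1)

/-- The finite Hilbert transform: the principal-value limit
`T(f)(t) = lim_{ε→0⁺} (1/π) ∫_{x∈(-1,1), |x-t|≥ε} f(x)/(x-t) dx`. -/
def FHT (f : ℝ → ℂ) (t : ℝ) : ℂ :=
  limUnder (nhdsWithin (0 : ℝ) (Set.Ioi 0)) fun ε : ℝ =>
    (Real.pi : ℂ)⁻¹ *
      ∫ x in {x : ℝ | x ∈ Set.Ioo (-1 : ℝ) 1 ∧ ε ≤ |x - t|}, f x / ((x : ℂ) - (t : ℂ))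

/-- The operator `T̂(g)(x) = -(1-x²)^{-1/2} T(t ↦ √(1-t²) g(t))(x)`. -/
def hatT (g : ℝ → ℂ) (x : ℝ) : ℂ :=
  -((Real.sqrt (1 - x ^ 2) : ℂ))⁻¹ * FHT (fun t => (Real.sqrt (1 - t ^ 2) : ℂ) * g t) x

/-- Membership in the Zygmund space `L log L(-1,1)`:
`f` is a.e. measurable on `(-1,1)` and `∫ |f| log⁺|f| < ∞`. -/
def MemLlogL (f : ℝ → ℂ) : Prop :=
  AEStronglyMeasurable f μI ∧
    IntegrableOn (fun x => ‖f x‖ * max (Real.log ‖f x‖) 0) (Set.Ioo (-1 : ℝ) 1)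

/-- The distribution function `λ ↦ |{x ∈ (-1,1) : |f(x)| > λ}|`. -/
def distFun (f : ℝ → ℂ) (lam : ℝ) : ℝ :=
  (volume {x : ℝ | x ∈ Set.Ioo (-1 : ℝ) 1 ∧ lam < ‖f x‖}).toReal

/-- The decreasing rearrangement `f*` of `f`, a function on `(0,2)`. -/
def decRearr (f : ℝ → ℂ) (t : ℝ) : ℝ :=
  sInf {lam : ℝ | 0 ≤ lam ∧ distFun f lam ≤ t}

/-- The `L log L` norm `‖f‖ = ∫_0^2 f*(t) log(2e/t) dt`. -/
def llogLNorm (f : ℝ → ℂ) : ℝ :=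
  ∫ t in Set.Ioo (0 : ℝ) 2, decRearr f t * Real.log (2 * Real.exp 1 / t)

/-- The `L(log L)^α` norm `∫_0^2 f*(t) log^α(2e/t) dt` (for `α = 0` this is the `L¹` norm). -/
def zygNorm (α : ℝ) (f : ℝ → ℂ) : ℝ :=
  ∫ t in Set.Ioo (0 : ℝ) 2, decRearr f t * Real.log (2 * Real.exp 1 / t) ^ α

/-- Membership in the Zygmund space `L(log L)^α(-1,1)`. -/
def MemZyg (α : ℝ) (f : ℝ → ℂ) : Prop :=
  AEStronglyMeasurable f μI ∧
    IntegrableOn (fun t => decRearr f t * Real.log (2 * Real.exp 1 / t) ^ α)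
      (Set.Ioo (0 : ℝ) 2)

/-- Membership in `L(log L)²(-1,1)`: `∫ |f| (log(2+|f|))² < ∞`. -/
def MemLlogL2 (f : ℝ → ℂ) : Prop :=
  AEStronglyMeasurable f μI ∧
    IntegrableOn (fun x => ‖f x‖ * Real.log (2 + ‖f x‖) ^ 2) (Set.Ioo (-1 : ℝ) 1)

/-- The constant `c(β,γ) = max{1/(1-β), 1/(1-γ), 1/(β+γ-1)}`. -/
def cBG (β γ : ℝ) : ℝ := max (max (1 / (1 - β)) (1 / (1 - γ))) (1 / (β + γ - 1))

/-!
The map `x = cos θ` turns the interval into the unit circle and the complement of the interval into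
the unit disc, through the Joukowski map. For integrable `f` and `g = T f`, the function `H` on the
disc obtained from the Cauchy transform of `f` and a branch of `√(z² - 1)` lies in the Smirnov
class, and its boundary values are `|sin θ| f (cos θ) + i sin θ g (cos θ)`. By Smirnov's theorem
`H` is recovered from its boundary values. Recovering it from the even part gives back the Cauchy
transform of `f`; recovering it from the odd part gives `H = H 0 - C (√(1 - t²) g) ∘ J`, with `C`
the Cauchy transform and `J` the Joukowski map. Comparing boundary values in the latter yields
`T (√(1 - t²) g) = H 0 - √(1 - t²) f`. Conversely, if `√(1 - t²) f = c - T (√(1 - t²) g)`, then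
`c - C (√(1 - t²) g) ∘ J` is a Smirnov function with the boundary values above, so its even part
identifies it with the `H` attached to `f`, whence `T f = g`.
-/

open scoped Topology

section Fatou

open Metric

variable {E : Type*} [NormedAddCommGroup E] [NormedSpace ℂ E] {f : ℂ → E} {c w : ℂ} {ρ : ℝ}

lemma continuousOn_inv_sub_sq {s : Set ℂ} (hw : w ∉ s) :
    ContinuousOn (fun z => ((z - w) ^ 2)⁻¹) s :=
  ContinuousOn.inv₀ (by fun_prop) fun _ hz =>
    pow_ne_zero _ (sub_ne_zero.2 (ne_of_mem_of_not_mem hz hw))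

lemma circleIntegral_inv_sub_sq_smul_eq_zero (hρ : 0 ≤ ρ) (hf : DiffContOnCl ℂ f (ball c ρ))
    (hw : w ∉ closedBall c ρ) : (∮ z in C(c, ρ), ((z - w) ^ 2)⁻¹ • f z) = 0 := by
  refine DiffContOnCl.circleIntegral_eq_zero hρ (DiffContOnCl.smul ⟨fun z hz => ?_, ?_⟩ hf)
  · have hzw := sub_ne_zero.2 (ne_of_mem_of_not_mem (ball_subset_closedBall hz) hw)
    have hd : DifferentiableAt ℂ (fun z => (z - w) ^ 2) z := by fun_prop
    exact (hd.inv (pow_ne_zero 2 hzw)).differentiableWithinAt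
  · exact (continuousOn_inv_sub_sq hw).mono closure_ball_subset_closedBall

lemma circleIntegral_inv_sub_sq_smul [CompleteSpace E] (hf : DiffContOnCl ℂ f (ball c ρ))
    (hw : w ∈ ball c ρ) :
    (∮ z in C(c, ρ), ((z - w) ^ 2)⁻¹ • f z) = (2 * Real.pi * Complex.I : ℂ) • deriv f w := by
  have hρ : 0 < ρ := pos_of_mem_ball hw
  have hball := isOpen_ball.mem_nhds hw
  have hws : w ∉ sphere c ρ := fun h => (mem_ball.1 hw).ne (mem_sphere.1 h)
  have hslope : DiffContOnCl ℂ (dslope f w) (ball c ρ) := by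
    refine ⟨(Complex.differentiableOn_dslope hball).2 hf.differentiableOn, ?_⟩
    refine (continuousOn_dslope (mem_of_superset hball subset_closure)).2
      ⟨hf.continuousOn, hf.differentiableAt isOpen_ball hw⟩
  have hsplit : EqOn (fun z => (z - w)⁻¹ • dslope f w z)
      (fun z => ((z - w) ^ 2)⁻¹ • f z - ((z - w) ^ 2)⁻¹ • f w) (sphere c ρ) := fun z hz => by
    have hne : z ≠ w := ne_of_mem_of_not_mem hz hws
    simp only [dslope_of_ne _ hne, slope_def_module, smul_smul, ← smul_sub, sq, mul_inv]
  have hconst : (∮ z in C(c, ρ), ((z - w) ^ 2)⁻¹ • f w) = 0 := by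
    rw [circleIntegral.integral_smul_const]
    have := circleIntegral.integral_sub_zpow_of_ne (n := -2) (by norm_num) c w ρ
    simp only [zpow_neg, zpow_ofNat] at this
    rw [this, zero_smul]
  have hint (g : ℂ → E) (hg : ContinuousOn g (sphere c ρ)) :
      CircleIntegrable (fun z => ((z - w) ^ 2)⁻¹ • g z) c ρ :=
    ((continuousOn_inv_sub_sq hws).smul hg).circleIntegrable hρ.le
  have hcauchy := hslope.circleIntegral_sub_inv_smul hw
  rwa [dslope_same, circleIntegral.integral_congr hρ.le hsplit,
    circleIntegral.integral_sub (hint f (hf.continuousOn_ball.mono sphere_subset_closedBall))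
      (hint (fun _ => f w) continuousOn_const), hconst, sub_zero] at hcauchy

lemma integral_poissonKernel_circleMap (hw : ‖w‖ < 1) :
    ∫ θ in (0 : ℝ)..2 * Real.pi, (1 - ‖w‖ ^ 2) / ‖circleMap 0 1 θ - w‖ ^ 2 = 2 * Real.pi := by
  have hone : DiffContOnCl ℂ (fun _ : ℂ => (1 : ℂ)) (ball 0 1) := diffContOnCl_const
  have h := hone.circleAverage_poissonKernel_smul' (w := w) (by simpa using hw)
  rw [Real.circleAverage_def] at h
  simp only [sub_zero, Complex.real_smul, mul_one,
    intervalIntegral.integral_ofReal, norm_circleMap_zero, abs_one, one_pow] at h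
  norm_cast at h
  field_simp [Real.pi_ne_zero] at h
  linarith

section Kernel

variable {a ω : ℂ} {r : ℝ}

lemma norm_ofReal_mul_of_norm_eq_one (ha : ‖a‖ = 1) (hr : 0 ≤ r) : ‖(r : ℂ) * a‖ = r := by
  rw [norm_mul, ha, Complex.norm_of_nonneg hr, mul_one]

lemma one_sub_le_norm_sub_mul (ha : ‖a‖ = 1) (hω : ‖ω‖ = 1) (hr : 0 ≤ r) :
    1 - r ≤ ‖ω - r * a‖ := by
  have h := norm_sub_norm_le ω (r * a)
  rwa [hω, norm_ofReal_mul_of_norm_eq_one ha hr] at h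

lemma norm_sub_le_two_mul_norm_sub_mul (ha : ‖a‖ = 1) (hω : ‖ω‖ = 1) (hr : r ∈ Ioo (0 : ℝ) 1) :
    ‖ω - a‖ ≤ 2 * ‖ω - r * a‖ := by
  have hdist : ‖r * a - a‖ = 1 - r := by
    rw [show r * a - a = -(((1 - r : ℝ) : ℂ) * a) by push_cast; ring, norm_neg,
      norm_ofReal_mul_of_norm_eq_one ha (by linarith [hr.2])]
  have htri := norm_add_le (ω - r * a) (r * a - a)
  rw [sub_add_sub_cancel, hdist] at htri
  linarith [one_sub_le_norm_sub_mul ha hω hr.1.le]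

lemma norm_sub_div_eq (ha : ‖a‖ = 1) (hω : ‖ω‖ = 1) (hr : 0 < r) :
    ‖ω - a / r‖ = ‖ω - r * a‖ / r := by
  have hr' : (r : ℂ) ≠ 0 := by exact_mod_cast hr.ne'
  have hconj {z : ℂ} (hz : ‖z‖ = 1) : z * (starRingEnd ℂ) z = 1 := by
    rw [Complex.mul_conj', hz]; norm_num
  have hreflect : ω - a / r = -(a * ω * (starRingEnd ℂ) (ω - r * a)) / r := by
    rw [map_sub, map_mul, Complex.conj_ofReal]
    field_simp
    linear_combination a * hconj hω - r * ω * hconj ha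
  rw [hreflect, norm_div, norm_neg, norm_mul, norm_mul, ha, hω, RCLike.norm_conj,
    Complex.norm_of_nonneg hr.le, one_mul, one_mul]

lemma norm_inv_sq_sub_inv_sq_le (ha : ‖a‖ = 1) (hω : ‖ω‖ = 1) (hr : r ∈ Ioo (0 : ℝ) 1) :
    ‖((ω - r * a) ^ 2)⁻¹ - ((ω - a / r) ^ 2)⁻¹‖ ≤ 4 * (1 - r) / ‖ω - r * a‖ ^ 3 := by
  obtain ⟨h0, h1⟩ := hr
  have hr' : (r : ℂ) ≠ 0 := by exact_mod_cast h0.ne'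
  have hq := norm_sub_div_eq ha hω h0
  have he : 0 < ‖ω - r * a‖ := by linarith [one_sub_le_norm_sub_mul ha hω h0.le]
  have hp0 : ω - r * a ≠ 0 := norm_pos_iff.1 he
  have hq0 : ω - a / r ≠ 0 := norm_pos_iff.1 (by rw [hq]; positivity)
  have hdiff : ‖r * a - a / r‖ = (1 - r ^ 2) / r := by
    rw [show r * a - a / r = -(((1 - r ^ 2) / r : ℝ) * a) by push_cast; field_simp; ring,
      norm_neg, norm_ofReal_mul_of_norm_eq_one ha (div_nonneg (by nlinarith) h0.le)]
  have hsum : ‖(ω - r * a) + (ω - a / r)‖ ≤ ‖ω - r * a‖ + ‖ω - r * a‖ / r :=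
    (norm_add_le _ _).trans_eq (by rw [hq])
  have hr2 : 0 ≤ (1 - r ^ 2) / r := div_nonneg (by nlinarith) h0.le
  rw [show ((ω - r * a) ^ 2)⁻¹ - ((ω - a / r) ^ 2)⁻¹ =
      (r * a - a / r) * ((ω - r * a) + (ω - a / r)) / ((ω - r * a) ^ 2 * (ω - a / r) ^ 2) by
    rw [inv_sub_inv (pow_ne_zero 2 hp0) (pow_ne_zero 2 hq0)]; congr 1; ring,
    norm_div, norm_mul, norm_mul, norm_pow, norm_pow, hq, hdiff]
  generalize ‖ω - r * a‖ = e at *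
  calc (1 - r ^ 2) / r * ‖(ω - r * a) + (ω - a / r)‖ / (e ^ 2 * (e / r) ^ 2)
      ≤ (1 - r ^ 2) / r * (e + e / r) / (e ^ 2 * (e / r) ^ 2) := by gcongr
    _ = (1 - r) * (1 + r) ^ 2 / e ^ 3 := by field_simp; ring
    _ ≤ (1 - r) * 4 / e ^ 3 := by
      have : (1 + r) ^ 2 ≤ 4 := by nlinarith
      have := sub_nonneg.2 h1.le
      gcongr
    _ = 4 * (1 - r) / e ^ 3 := by ring

end Kernel

section RadialDerivative

variable {R : ℂ → ℂ} {a : ℂ} {r δ η M : ℝ}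

lemma norm_kernel_mul_le (ha : ‖a‖ = 1) (hδ : 0 < δ) (hη : 0 ≤ η)
    (hM : ∀ ω : ℂ, ‖ω‖ = 1 → ‖R ω‖ ≤ M)
    (hRη : ∀ ω : ℂ, ‖ω‖ = 1 → ‖ω - a‖ < δ → ‖R ω‖ ≤ η * ‖ω - a‖) (hr : r ∈ Ioo (0 : ℝ) 1)
    {ω : ℂ} (hω : ‖ω‖ = 1) :
    ‖(((ω - r * a) ^ 2)⁻¹ - ((ω - a / r) ^ 2)⁻¹) * R ω‖ ≤
      8 * η * ((1 - ‖(r : ℂ) * a‖ ^ 2) / ‖ω - r * a‖ ^ 2) + 32 * M / δ ^ 3 * (1 - r) := by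
  have hk := norm_inv_sq_sub_inv_sq_le ha hω hr
  have hea := norm_sub_le_two_mul_norm_sub_mul ha hω hr
  have her := one_sub_le_norm_sub_mul ha hω hr.1.le
  have hM0 : 0 ≤ M := (norm_nonneg _).trans (hM ω hω)
  rw [norm_mul, norm_ofReal_mul_of_norm_eq_one ha hr.1.le]
  obtain ⟨h0, h1⟩ := hr
  have hr1 : 0 < 1 - r := by linarith
  have hr2 : 1 - r ≤ 1 - r ^ 2 := by nlinarith
  generalize ‖ω - r * a‖ = e at *
  have he : 0 < e := hr1.trans_le her
  rcases lt_or_ge ‖ω - a‖ δ with hnear | hfar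
  · calc _ ≤ 4 * (1 - r) / e ^ 3 * (η * (2 * e)) := by
          gcongr
          exact (hRη ω hω hnear).trans (by gcongr)
      _ = 8 * η * ((1 - r) / e ^ 2) := by field_simp; ring
      _ ≤ 8 * η * ((1 - r ^ 2) / e ^ 2) := by gcongr
      _ ≤ _ := le_add_of_nonneg_right (by positivity)
  · calc _ ≤ 4 * (1 - r) / (δ / 2) ^ 3 * M := by
          gcongr
          · exact hk.trans (by gcongr; linarith)
          · exact hM ω hω
      _ = 32 * M / δ ^ 3 * (1 - r) := by field_simp; ring
      _ ≤ _ := le_add_of_nonneg_left (mul_nonneg (by positivity)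
          (div_nonneg (hr1.le.trans hr2) (by positivity)))

-- Subtracting the kernel at the reflected point `a / r`, which annihilates `R`, gains one order
-- of decay.
lemma circleIntegral_kernel_sub_reflected_mul (hR : DiffContOnCl ℂ R (ball 0 1)) (ha : ‖a‖ = 1)
    (hr : r ∈ Ioo (0 : ℝ) 1) :
    (∮ z in C(0, 1), (((z - r * a) ^ 2)⁻¹ - ((z - a / r) ^ 2)⁻¹) * R z) =
      2 * Real.pi * Complex.I * deriv R (r * a) := by
  have hin : (r : ℂ) * a ∈ ball (0 : ℂ) 1 := by
    rw [mem_ball_zero_iff, norm_ofReal_mul_of_norm_eq_one ha hr.1.le]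
    exact hr.2
  have hout : a / r ∉ closedBall (0 : ℂ) 1 := by
    rw [mem_closedBall_zero_iff, norm_div, ha, Complex.norm_of_nonneg hr.1.le, not_le,
      lt_div_iff₀ hr.1, one_mul]
    exact hr.2
  have hin' : (r : ℂ) * a ∉ sphere (0 : ℂ) 1 := fun h => (mem_ball.1 hin).ne (mem_sphere.1 h)
  have hRs : ContinuousOn R (sphere 0 1) := hR.continuousOn_ball.mono sphere_subset_closedBall
  simp only [sub_mul, ← smul_eq_mul (_⁻¹) (R _)]
  rw [circleIntegral.integral_sub, circleIntegral_inv_sub_sq_smul hR hin,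
    circleIntegral_inv_sub_sq_smul_eq_zero zero_le_one hR hout, sub_zero, smul_eq_mul]
  · exact ((continuousOn_inv_sub_sq hin').smul hRs).circleIntegrable zero_le_one
  · exact (((continuousOn_inv_sub_sq hout).mono sphere_subset_closedBall).smul
      hRs).circleIntegrable zero_le_one

lemma norm_deriv_radial_le (hR : DiffContOnCl ℂ R (ball 0 1)) (ha : ‖a‖ = 1) (hδ : 0 < δ)
    (hη : 0 ≤ η) (hM : ∀ ω : ℂ, ‖ω‖ = 1 → ‖R ω‖ ≤ M)
    (hRη : ∀ ω : ℂ, ‖ω‖ = 1 → ‖ω - a‖ < δ → ‖R ω‖ ≤ η * ‖ω - a‖) (hr : r ∈ Ioo (0 : ℝ) 1) :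
    ‖deriv R (r * a)‖ ≤ 8 * η + 32 * M / δ ^ 3 * (1 - r) := by
  have hra := norm_ofReal_mul_of_norm_eq_one ha hr.1.le
  have hra1 : ‖(r : ℂ) * a‖ < 1 := hra.trans_lt hr.2
  have hoff (θ : ℝ) : circleMap 0 1 θ ≠ r * a := fun h => hra1.ne (by simp [← h])
  set P : ℝ → ℝ := fun θ => (1 - ‖(r : ℂ) * a‖ ^ 2) / ‖circleMap 0 1 θ - r * a‖ ^ 2 with hP
  have hPint : IntervalIntegrable P volume 0 (2 * Real.pi) := by
    refine (continuous_const.div (by fun_prop) fun θ => ?_).intervalIntegrable _ _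
    exact pow_ne_zero 2 (norm_ne_zero_iff.2 (sub_ne_zero.2 (hoff θ)))
  have hbound : ‖∮ z in C(0, 1), (((z - r * a) ^ 2)⁻¹ - ((z - a / r) ^ 2)⁻¹) * R z‖ ≤
      ∫ θ in (0 : ℝ)..2 * Real.pi, (8 * η * P θ + 32 * M / δ ^ 3 * (1 - r)) := by
    refine intervalIntegral.norm_integral_le_of_norm_le Real.two_pi_pos.le
      (ae_of_all _ fun θ _ => ?_) ((hPint.const_mul _).add intervalIntegrable_const)
    have hθ : ‖circleMap 0 1 θ‖ = 1 := by simp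
    rw [norm_smul, deriv_circleMap, norm_mul, hθ, Complex.norm_I, one_mul, one_mul]
    exact norm_kernel_mul_le ha hδ hη hM hRη hr hθ
  rw [intervalIntegral.integral_add (hPint.const_mul _) intervalIntegrable_const,
    intervalIntegral.integral_const_mul, hP,
    integral_poissonKernel_circleMap hra1, circleIntegral_kernel_sub_reflected_mul hR ha hr,
    intervalIntegral.integral_const, smul_eq_mul, norm_mul] at hbound
  have h2pi : ‖(2 * Real.pi * Complex.I : ℂ)‖ = 2 * Real.pi := by
    simp [abs_of_pos Real.pi_pos]
  rw [h2pi] at hbound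
  exact le_of_mul_le_mul_left (by linarith) Real.two_pi_pos

lemma tendsto_deriv_radial_of_isLittleO (hR : DiffContOnCl ℂ R (ball 0 1)) (ha : ‖a‖ = 1)
    (hRa : R =o[𝓝[sphere 0 1] a] fun ω => ω - a) :
    Tendsto (fun r : ℝ => deriv R (r * a)) (𝓝[<] 1) (𝓝 0) := by
  obtain ⟨M, hM⟩ := (isCompact_sphere (0 : ℂ) 1).exists_bound_of_continuousOn
    (hR.continuousOn_ball.mono sphere_subset_closedBall)
  rw [Metric.tendsto_nhds]
  intro ε hε
  obtain ⟨δ, hδ, hδR⟩ := Metric.mem_nhdsWithin_iff.1 (hRa.bound (show 0 < ε / 16 by positivity))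
  have hbound (r : ℝ) (hr : r ∈ Ioo (0 : ℝ) 1) :=
    norm_deriv_radial_le hR ha hδ (by positivity) (fun ω hω => hM ω (by simpa using hω))
      (fun ω hω hωa => hδR ⟨by rwa [mem_ball, dist_eq_norm], by simpa using hω⟩) hr
  have hlim : Tendsto (fun r : ℝ => 8 * (ε / 16) + 32 * M / δ ^ 3 * (1 - r)) (𝓝[<] 1)
      (𝓝 (8 * (ε / 16) + 32 * M / δ ^ 3 * (1 - 1))) :=
    (Continuous.tendsto (by fun_prop) 1).mono_left nhdsWithin_le_nhds
  filter_upwards [hlim.eventually_lt_const (u := ε) (by linarith),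
    Ioo_mem_nhdsLT (zero_lt_one' ℝ)] with r hrε hr
  rw [dist_zero_right]
  exact (hbound r hr).trans_lt hrε

end RadialDerivative

lemma isLittleO_sphere_of_hasDerivAt_circleMap {R : ℂ → ℂ} {θ : ℝ} (hR0 : R (circleMap 0 1 θ) = 0)
    (hR : HasDerivAt (fun φ : ℝ => R (circleMap 0 1 φ)) 0 θ) :
    R =o[𝓝[sphere 0 1] circleMap 0 1 θ] fun ω => ω - circleMap 0 1 θ := by
  set a := circleMap 0 1 θ with ha
  have ha1 : ‖a‖ = 1 := by simp [ha]
  have ha0 : a ≠ 0 := norm_pos_iff.1 (ha1 ▸ one_pos)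
  have hlog : HasDerivAt (fun ω => Complex.log (ω / a)) (a⁻¹) a := by
    simpa [ha0] using ((hasDerivAt_id a).div_const a).clog (by simp [ha0])
  set ψ : ℂ → ℝ := fun ω => θ + (Complex.log (ω / a)).im with hψ
  have hψa : ψ a = θ := by simp [hψ, ha0]
  have hψO : (fun ω => ψ ω - θ) =O[𝓝[sphere 0 1] a] fun ω => ω - a := by
    refine ((Asymptotics.IsBigO.of_bound 1 (Eventually.of_forall fun ω => ?_)).trans
      hlog.isBigO_sub).mono nhdsWithin_le_nhds
    simpa [hψ, ha0] using Complex.abs_im_le_norm (Complex.log (ω / a))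
  have hψt : Tendsto ψ (𝓝[sphere 0 1] a) (𝓝 θ) := by
    have := (Complex.continuous_im.continuousAt.comp hlog.continuousAt).const_add θ
    exact hψa ▸ (this.tendsto).mono_left nhdsWithin_le_nhds
  have hparam : ∀ ω ∈ sphere (0 : ℂ) 1, circleMap 0 1 (ψ ω) = ω := fun ω hω => by
    have hω1 : ‖ω‖ = 1 := by simpa using hω
    have hne : ω / a ≠ 0 := div_ne_zero (norm_pos_iff.1 (hω1 ▸ one_pos)) ha0
    have him : ((Complex.log (ω / a)).im : ℂ) * Complex.I = Complex.log (ω / a) := by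
      apply Complex.ext <;> simp [Complex.log_re, hω1, ha1]
    have : circleMap 0 1 (ψ ω) = a * Complex.exp (Complex.log (ω / a)) := by
      rw [← him, show ψ ω = θ + (Complex.log (ω / a)).im from rfl, ha]
      generalize (Complex.log (ω / circleMap 0 1 θ)).im = s
      simp [circleMap, add_mul, Complex.exp_add]
    rw [this, Complex.exp_log hne]
    field_simp
  have ho := ((hasDerivAt_iff_isLittleO.1 hR).comp_tendsto hψt).trans_isBigO hψO
  refine ho.congr' ?_ EventuallyEq.rfl
  filter_upwards [self_mem_nhdsWithin] with ω hω
  simp [hparam ω hω, ← ha, hR0]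

lemma exists_lipschitzWith_primitive {G : ℂ → ℂ} (hG : DifferentiableOn ℂ G (ball 0 1)) {C : ℝ}
    (hC : ∀ ζ ∈ ball (0 : ℂ) 1, ‖G ζ‖ ≤ C) :
    ∃ K Q, LipschitzWith K Q ∧ ∀ ζ ∈ ball (0 : ℂ) 1, HasDerivAt Q (G ζ) ζ := by
  obtain ⟨P, hP⟩ := hG.isExactOn_ball
  have hPlip : LipschitzOnWith C.toNNReal P (ball 0 1) :=
    (convex_ball (0 : ℂ) 1).lipschitzOnWith_of_nnnorm_hasDerivWithin_le
      (fun ζ hζ => (hP ζ hζ).hasDerivWithinAt)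
      fun ζ hζ => (Real.le_toNNReal_iff_coe_le ((norm_nonneg _).trans (hC ζ hζ))).2 (hC ζ hζ)
  obtain ⟨Q, hQ, hPQ⟩ := hPlip.extend_finite_dimension
  refine ⟨_, Q, hQ, fun ζ hζ => (hP ζ hζ).congr_of_eventuallyEq ?_⟩
  filter_upwards [isOpen_ball.mem_nhds hζ] with z hz using (hPQ hz).symm

/-- **Fatou's theorem.** The primitive of a bounded holomorphic function is Lipschitz up to the
circle, hence differentiable almost everywhere along it by Rademacher's theorem. -/
theorem ae_exists_tendsto_radial_of_bounded {G : ℂ → ℂ} (hG : DifferentiableOn ℂ G (ball 0 1))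
    {C : ℝ} (hC : ∀ ζ ∈ ball (0 : ℂ) 1, ‖G ζ‖ ≤ C) :
    ∀ᵐ θ : ℝ, ∃ l, Tendsto (fun r : ℝ => G (r * circleMap 0 1 θ)) (𝓝[<] 1) (𝓝 l) := by
  obtain ⟨K, Q, hQ, hQG⟩ := exists_lipschitzWith_primitive hG hC
  filter_upwards [(hQ.comp (lipschitzWith_circleMap 0 1)).ae_differentiableAt_real] with θ hθ
  set a := circleMap 0 1 θ with ha
  have ha1 : ‖a‖ = 1 := by simp [ha]
  have ha0 : a ≠ 0 := norm_pos_iff.1 (ha1 ▸ one_pos)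
  set l := deriv (Q ∘ circleMap 0 1) θ / (a * Complex.I) with hl
  set R : ℂ → ℂ := fun z => Q z - Q a - l * (z - a) with hR
  have hRd : ∀ ζ ∈ ball (0 : ℂ) 1, HasDerivAt R (G ζ - l) ζ := fun ζ hζ => by
    simpa using ((hQG ζ hζ).sub_const (Q a)).fun_sub (((hasDerivAt_id ζ).sub_const a).const_mul l)
  have hRdc : DiffContOnCl ℂ R (ball 0 1) := by
    have := hQ.continuous
    exact ⟨fun ζ hζ => (hRd ζ hζ).differentiableAt.differentiableWithinAt,
      Continuous.continuousOn (by fun_prop)⟩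
  have hRθ : HasDerivAt (fun φ : ℝ => R (circleMap 0 1 φ)) 0 θ := by
    have := (hθ.hasDerivAt.sub_const (Q a)).fun_sub
      (((hasDerivAt_circleMap 0 1 θ).sub_const a).const_mul l)
    rwa [← ha, hl, div_mul_cancel₀ _ (mul_ne_zero ha0 Complex.I_ne_zero), sub_self] at this
  have hlim := tendsto_deriv_radial_of_isLittleO hRdc ha1
    (isLittleO_sphere_of_hasDerivAt_circleMap (by simp [hR, ← ha]) hRθ)
  refine ⟨l, tendsto_sub_nhds_zero_iff.1 (hlim.congr' ?_)⟩
  filter_upwards [Ioo_mem_nhdsLT (zero_lt_one' ℝ)] with r hr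
  refine (hRd _ ?_).deriv
  rw [mem_ball_zero_iff, norm_ofReal_mul_of_norm_eq_one ha1 hr.1.le]
  exact hr.2

end Fatou

section Circle

open Metric

/-- Arc length on the unit circle, parametrised by the angle. -/
def μT : Measure ℝ := volume.restrict (Ioc (-Real.pi) Real.pi)

instance isFiniteMeasure_μT : IsFiniteMeasure μT := by
  unfold μT
  infer_instance

lemma ofReal_mul_circleMap_mem_ball {r : ℝ} (hr : r ∈ Ioo (0 : ℝ) 1) (θ : ℝ) :
    (r : ℂ) * circleMap 0 1 θ ∈ ball (0 : ℂ) 1 := by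
  rw [mem_ball_zero_iff, norm_ofReal_mul_of_norm_eq_one (by simp) hr.1.le]
  exact hr.2

lemma tendsto_ofReal_mul_nhdsLT_one (z : ℂ) :
    Tendsto (fun r : ℝ => (r : ℂ) * z) (𝓝[<] 1) (𝓝 z) := by
  have h := (by fun_prop : Continuous fun r : ℝ => (r : ℂ) * z).tendsto 1
  rw [Complex.ofReal_one, one_mul] at h
  exact h.mono_left nhdsWithin_le_nhds

lemma diffContOnCl_comp_ofReal_mul {F : ℂ → ℂ} (hF : DifferentiableOn ℂ F (ball 0 1)) {r : ℝ}
    (hr : r ∈ Ioo (0 : ℝ) 1) : DiffContOnCl ℂ (fun w => F (r * w)) (ball 0 1) := by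
  refine DifferentiableOn.diffContOnCl (hF.comp (by fun_prop) fun w hw => ?_)
  have hw' : ‖w‖ ≤ 1 := mem_closedBall_zero_iff.1 (closure_ball_subset_closedBall hw)
  rw [mem_ball_zero_iff, norm_mul, Complex.norm_of_nonneg hr.1.le]
  exact mul_lt_one_of_nonneg_of_lt_one_left hr.1.le hr.2 hw'

lemma continuous_radial {F : ℂ → ℂ} (hF : DifferentiableOn ℂ F (ball 0 1)) {r : ℝ}
    (hr : r ∈ Ioo (0 : ℝ) 1) : Continuous fun θ : ℝ => F (r * circleMap 0 1 θ) :=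
  hF.continuousOn.comp_continuous (by fun_prop) fun θ => ofReal_mul_circleMap_mem_ball hr θ

lemma circleIntegral_eq_integral_μT (f : ℂ → ℂ) :
    (∮ z in C(0, 1), f z) =
      Complex.I * ∫ θ, circleMap 0 1 θ * f (circleMap 0 1 θ) ∂μT := by
  have hper : Function.Periodic (fun θ => circleMap 0 1 θ * f (circleMap 0 1 θ))
      (2 * Real.pi) := fun θ => by simp only [periodic_circleMap 0 1 θ]
  have hshift := hper.intervalIntegral_add_eq 0 (-Real.pi)
  rw [zero_add, show -Real.pi + 2 * Real.pi = Real.pi by ring] at hshift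
  rw [circleIntegral, μT, ← intervalIntegral.integral_of_le (by linarith [Real.pi_pos]), ← hshift,
    ← intervalIntegral.integral_const_mul]
  refine intervalIntegral.integral_congr fun θ _ => ?_
  simp only [deriv_circleMap, smul_eq_mul]
  ring

/-- A continuous weight on the circle that represents evaluation at the point `ζ` of the disc,
for functions holomorphic on the disc and continuous up to its boundary. -/
structure IsReproducingKernel (k : ℝ → ℂ) (ζ : ℂ) : Prop where
  mem_ball : ζ ∈ ball (0 : ℂ) 1
  continuous : Continuous k
  integral_mul : ∀ F : ℂ → ℂ, DiffContOnCl ℂ F (ball 0 1) →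
    ∫ θ, F (circleMap 0 1 θ) * k θ ∂μT = 2 * Real.pi * F ζ

lemma one_sub_mul_ne_zero {a ζ : ℂ} (ha : ‖a‖ ≤ 1) (hζ : ζ ∈ ball (0 : ℂ) 1) :
    1 - a * ζ ≠ 0 := fun h => by
  have hlt : ‖a * ζ‖ < 1 := by
    rw [norm_mul]
    exact mul_lt_one_of_nonneg_of_lt_one_right ha (norm_nonneg ζ) (mem_ball_zero_iff.1 hζ)
  rw [← sub_eq_zero.1 h, norm_one] at hlt
  exact hlt.false

lemma continuous_inv_one_sub_circleMap_mul {ζ : ℂ} (hζ : ζ ∈ ball (0 : ℂ) 1) :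
    Continuous fun θ : ℝ => (1 - circleMap 0 1 θ * ζ)⁻¹ :=
  Continuous.inv₀ (by fun_prop) fun θ => one_sub_mul_ne_zero (by simp) hζ

lemma isReproducingKernel_inv_one_sub_circleMap_neg_mul {ζ : ℂ} (hζ : ζ ∈ ball (0 : ℂ) 1) :
    IsReproducingKernel (fun θ => (1 - circleMap 0 1 (-θ) * ζ)⁻¹) ζ where
  mem_ball := hζ
  continuous := (continuous_inv_one_sub_circleMap_mul hζ).comp continuous_neg
  integral_mul F hF := by
    have hcauchy := hF.circleIntegral_sub_inv_smul hζ
    rw [circleIntegral_eq_integral_μT, smul_eq_mul,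
      show 2 * Real.pi * Complex.I * F ζ = Complex.I * (2 * Real.pi * F ζ) by ring] at hcauchy
    rw [← mul_left_cancel₀ Complex.I_ne_zero hcauchy]
    refine integral_congr_ae (ae_of_all _ fun θ => ?_)
    have hω : circleMap 0 1 θ ≠ 0 := circleMap_ne_center one_ne_zero
    have hne : circleMap 0 1 θ - ζ ≠ 0 := circleMap_ne_mem_ball hζ θ |> sub_ne_zero.2
    have hinv : circleMap 0 1 (-θ) = (circleMap 0 1 θ)⁻¹ := by simp [circleMap_zero_inv]
    have hden : 1 - (circleMap 0 1 θ)⁻¹ * ζ = (circleMap 0 1 θ - ζ) / circleMap 0 1 θ := by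
      field_simp
    simp only [hinv, hden, smul_eq_mul]
    field_simp

lemma isReproducingKernel_inv_one_sub_circleMap_mul {ζ : ℂ} (hζ : ζ ∈ ball (0 : ℂ) 1) :
    IsReproducingKernel (fun θ => (1 - circleMap 0 1 θ * ζ)⁻¹) 0 where
  mem_ball := mem_ball_self one_pos
  continuous := continuous_inv_one_sub_circleMap_mul hζ
  integral_mul F hF := by
    have hinv : DiffContOnCl ℂ (fun w => (1 - w * ζ)⁻¹) (ball 0 1) :=
      DiffContOnCl.inv (Differentiable.diffContOnCl (by fun_prop)) fun w hw =>
        one_sub_mul_ne_zero (mem_closedBall_zero_iff.1 (closure_ball_subset_closedBall hw)) hζ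
    simpa using (isReproducingKernel_inv_one_sub_circleMap_neg_mul
      (mem_ball_self one_pos)).integral_mul _ (hF.smul hinv)

lemma integral_radial {F : ℂ → ℂ} (hF : DifferentiableOn ℂ F (ball 0 1)) {r : ℝ}
    (hr : r ∈ Ioo (0 : ℝ) 1) : ∫ θ, F (r * circleMap 0 1 θ) ∂μT = 2 * Real.pi * F 0 := by
  simpa using (isReproducingKernel_inv_one_sub_circleMap_mul
    (mem_ball_self one_pos)).integral_mul _ (diffContOnCl_comp_ofReal_mul hF hr)

end Circle

section RadialLimits

open Metric

lemma one_le_norm_one_add {a : ℂ} (ha : 0 ≤ a.re) : 1 ≤ ‖1 + a‖ :=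
  (by simpa using ha : 1 ≤ (1 + a).re).trans (Complex.re_le_norm _)

lemma norm_le_norm_one_add {a : ℂ} (ha : 0 ≤ a.re) : ‖a‖ ≤ ‖1 + a‖ := by
  rw [← sq_le_sq₀ (norm_nonneg _) (norm_nonneg _), Complex.sq_norm, Complex.sq_norm,
    Complex.normSq_apply, Complex.normSq_apply]
  simp only [Complex.add_re, Complex.one_re, Complex.add_im, Complex.one_im, zero_add]
  nlinarith

lemma one_add_ne_zero {a : ℂ} (ha : 0 ≤ a.re) : 1 + a ≠ 0 :=
  norm_pos_iff.1 (one_pos.trans_le (one_le_norm_one_add ha))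

lemma integrable_radial {F : ℂ → ℂ} (hF : DifferentiableOn ℂ F (ball 0 1)) {r : ℝ}
    (hr : r ∈ Ioo (0 : ℝ) 1) : Integrable (fun θ => F (r * circleMap 0 1 θ)) μT :=
  (continuous_radial hF hr).integrableOn_Ioc

variable {A : ℂ → ℂ}

lemma lintegral_log_norm_one_add_radial (hA : DifferentiableOn ℂ A (ball 0 1))
    (hre : ∀ ζ ∈ ball (0 : ℂ) 1, 0 ≤ (A ζ).re) {r : ℝ} (hr : r ∈ Ioo (0 : ℝ) 1) :
    ∫⁻ θ, ENNReal.ofReal (Real.log ‖1 + A (r * circleMap 0 1 θ)‖) ∂μT =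
      ENNReal.ofReal (2 * Real.pi * Real.log ‖1 + A 0‖) := by
  have hd : DifferentiableOn ℂ (fun ζ => Complex.log (1 + A ζ)) (ball 0 1) :=
    (hA.const_add 1).clog fun ζ hζ => Or.inl (by
      simpa using add_pos_of_pos_of_nonneg one_pos (hre ζ hζ))
  have hint := (integrable_radial hd hr).re
  simp only [RCLike.re_to_complex, Complex.log_re] at hint
  rw [← ofReal_integral_eq_lintegral_ofReal hint (ae_of_all _ fun θ => Real.log_nonneg
    (one_le_norm_one_add (hre _ (ofReal_mul_circleMap_mem_ball hr θ))))]
  have hmean := congrArg Complex.re (integral_radial hd hr)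
  rw [← RCLike.re_to_complex, ← integral_re (integrable_radial hd hr)] at hmean
  simp only [RCLike.re_to_complex, Complex.log_re] at hmean
  rw [hmean]
  simp [Complex.mul_re, Complex.log_re]

/-- Fatou's lemma applied to `log ‖1 + A‖`, the real part of the holomorphic function
`log (1 + A)`, excludes an infinite limit. -/
lemma ae_not_tendsto_inv_one_add_zero (hA : DifferentiableOn ℂ A (ball 0 1))
    (hre : ∀ ζ ∈ ball (0 : ℂ) 1, 0 ≤ (A ζ).re) :
    ∀ᵐ θ ∂μT, ¬ Tendsto (fun r : ℝ => (1 + A (r * circleMap 0 1 θ))⁻¹) (𝓝[<] 1) (𝓝 0) := by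
  obtain ⟨r, -, hr, hr1⟩ := exists_seq_strictMono_tendsto' (zero_lt_one (α := ℝ))
  have hr1' : Tendsto r atTop (𝓝[<] 1) :=
    tendsto_nhdsWithin_iff.2 ⟨hr1, Eventually.of_forall fun n => (hr n).2⟩
  set L : ℕ → ℝ → ENNReal :=
    fun n θ => ENNReal.ofReal (Real.log ‖1 + A (r n * circleMap 0 1 θ)‖)
  have hL (n : ℕ) : Measurable (L n) := ENNReal.measurable_ofReal.comp
    (Real.measurable_log.comp (continuous_const.add (continuous_radial hA (hr n))).norm.measurable)
  have hfin : ∫⁻ θ, liminf (fun n => L n θ) atTop ∂μT ≠ ⊤ := by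
    refine ne_top_of_le_ne_top (ENNReal.ofReal_ne_top (r := 2 * Real.pi * Real.log ‖1 + A 0‖))
      ((lintegral_liminf_le hL).trans (le_of_eq ?_))
    simp only [L, lintegral_log_norm_one_add_radial hA hre (hr _), liminf_const]
  filter_upwards [ae_lt_top (Measurable.liminf hL) hfin] with θ hθ hlim
  refine hθ.ne (Tendsto.liminf_eq ?_)
  have hinv : Tendsto (fun n => ‖1 + A (r n * circleMap 0 1 θ)‖) atTop atTop := by
    have h := (tendsto_norm_zero.comp (hlim.comp hr1')).congr fun n =>
      norm_inv (1 + A (r n * circleMap 0 1 θ))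
    refine (tendsto_inv_nhdsGT_zero.comp (tendsto_nhdsWithin_iff.2 ⟨h, ?_⟩)).congr fun n =>
      inv_inv _
    exact Eventually.of_forall fun n => inv_pos.2 (norm_pos_iff.2
      (one_add_ne_zero (hre _ (ofReal_mul_circleMap_mem_ball (hr n) θ))))
  exact ENNReal.tendsto_ofReal_atTop.comp (Real.tendsto_log_atTop.comp hinv)

theorem exists_ae_tendsto_radial_of_re_nonneg (hA : DifferentiableOn ℂ A (ball 0 1))
    (hre : ∀ ζ ∈ ball (0 : ℂ) 1, 0 ≤ (A ζ).re) :
    ∃ a : ℝ → ℂ, ∀ᵐ θ ∂μT, 0 ≤ (a θ).re ∧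
      Tendsto (fun r : ℝ => A (r * circleMap 0 1 θ)) (𝓝[<] 1) (𝓝 (a θ)) := by
  suffices h : ∀ᵐ θ ∂μT, ∃ l, Tendsto (fun r : ℝ => A (r * circleMap 0 1 θ)) (𝓝[<] 1) (𝓝 l) by
    refine ⟨fun θ => limUnder (𝓝[<] 1) fun r : ℝ => A (r * circleMap 0 1 θ), h.mono fun θ hθ => ?_⟩
    have hlim := tendsto_nhds_limUnder hθ
    refine ⟨ge_of_tendsto ((Complex.continuous_re.tendsto _).comp hlim) ?_, hlim⟩
    filter_upwards [Ioo_mem_nhdsLT one_pos] with r hr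
      using hre _ (ofReal_mul_circleMap_mem_ball hr θ)
  have hne (ζ : ℂ) (hζ : ζ ∈ ball (0 : ℂ) 1) : 1 + A ζ ≠ 0 := one_add_ne_zero (hre ζ hζ)
  have hbdd (ζ : ℂ) (hζ : ζ ∈ ball (0 : ℂ) 1) : ‖(1 + A ζ)⁻¹‖ ≤ 1 := by
    rw [norm_inv]
    exact inv_le_one_of_one_le₀ (one_le_norm_one_add (hre ζ hζ))
  filter_upwards [ae_not_tendsto_inv_one_add_zero hA hre, ae_restrict_of_ae
    (ae_exists_tendsto_radial_of_bounded ((hA.const_add 1).fun_inv hne) hbdd)] with θ hzero ⟨c, hc⟩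
  have hc0 : c ≠ 0 := fun h => hzero (h ▸ hc)
  refine ⟨c⁻¹ - 1, ((hc.inv₀ hc0).sub_const 1).congr fun r => ?_⟩
  rw [inv_inv, add_sub_cancel_left]

end RadialLimits

section Smirnov

open Metric

variable {k : ℝ → ℂ} {ζ : ℂ}

namespace IsReproducingKernel

lemma exists_ae_norm_le (hk : IsReproducingKernel k ζ) : ∃ C, ∀ᵐ θ ∂μT, ‖k θ‖ ≤ C := by
  obtain ⟨C, hC⟩ := (isCompact_Icc (a := -Real.pi) (b := Real.pi)).exists_bound_of_continuousOn
    hk.continuous.continuousOn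
  exact ⟨C, (ae_restrict_mem measurableSet_Ioc).mono fun θ hθ => hC θ (Ioc_subset_Icc_self hθ)⟩

lemma integrable_mul (hk : IsReproducingKernel k ζ) {h : ℝ → ℂ} (hh : Integrable h μT) :
    Integrable (fun θ => h θ * k θ) μT :=
  let ⟨_, hC⟩ := hk.exists_ae_norm_le
  hh.mul_bdd hk.continuous.aestronglyMeasurable hC

lemma integral_radialLimit_mul_of_bounded (hk : IsReproducingKernel k ζ) {G : ℂ → ℂ}
    (hG : DifferentiableOn ℂ G (ball 0 1)) {B : ℝ} (hB : ∀ z ∈ ball (0 : ℂ) 1, ‖G z‖ ≤ B)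
    {m : ℝ → ℂ}
    (hm : ∀ᵐ θ ∂μT, Tendsto (fun r : ℝ => G (r * circleMap 0 1 θ)) (𝓝[<] 1) (𝓝 (m θ))) :
    ∫ θ, m θ * k θ ∂μT = 2 * Real.pi * G ζ := by
  obtain ⟨C, hC⟩ := hk.exists_ae_norm_le
  have hB0 : 0 ≤ B := (norm_nonneg _).trans (hB 0 (mem_ball_self one_pos))
  have hr : ∀ᶠ r : ℝ in 𝓝[<] 1, r ∈ Ioo (0 : ℝ) 1 := Ioo_mem_nhdsLT one_pos
  have hlim : Tendsto (fun r : ℝ => ∫ θ, G (r * circleMap 0 1 θ) * k θ ∂μT) (𝓝[<] 1)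
      (𝓝 (∫ θ, m θ * k θ ∂μT)) := by
    refine tendsto_integral_filter_of_dominated_convergence (fun _ => B * C) ?_ ?_
      (integrable_const _) ?_
    · filter_upwards [hr] with r hr
      exact ((continuous_radial hG hr).mul hk.continuous).aestronglyMeasurable
    · filter_upwards [hr] with r hr
      filter_upwards [hC] with θ hθ
      rw [norm_mul]
      exact mul_le_mul (hB _ (ofReal_mul_circleMap_mem_ball hr θ)) hθ (norm_nonneg _) hB0
    · filter_upwards [hm] with θ hθ using hθ.mul_const _
  have hval : Tendsto (fun r : ℝ => 2 * Real.pi * G (r * ζ)) (𝓝[<] 1)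
      (𝓝 (2 * Real.pi * G ζ)) :=
    ((hG.continuousOn.continuousAt (isOpen_ball.mem_nhds hk.mem_ball)).tendsto.comp
      (tendsto_ofReal_mul_nhdsLT_one ζ)).const_mul _
  refine tendsto_nhds_unique (hlim.congr' ?_) hval
  filter_upwards [hr] with r hr using hk.integral_mul _ (diffContOnCl_comp_ofReal_mul hG hr)

end IsReproducingKernel

lemma aestronglyMeasurable_radialLimit {G : ℂ → ℂ} (hG : DifferentiableOn ℂ G (ball 0 1))
    {m : ℝ → ℂ}
    (hm : ∀ᵐ θ ∂μT, Tendsto (fun r : ℝ => G (r * circleMap 0 1 θ)) (𝓝[<] 1) (𝓝 (m θ))) :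
    AEStronglyMeasurable m μT := by
  obtain ⟨r, -, hr, hr1⟩ := exists_seq_strictMono_tendsto' (zero_lt_one (α := ℝ))
  have hr1' : Tendsto r atTop (𝓝[<] 1) :=
    tendsto_nhdsWithin_iff.2 ⟨hr1, Eventually.of_forall fun n => (hr n).2⟩
  exact aestronglyMeasurable_of_tendsto_ae atTop
    (fun n => (continuous_radial hG (hr n)).aestronglyMeasurable)
    (hm.mono fun θ hθ => hθ.comp hr1')

variable {ι : Type*} [Fintype ι] {A : ι → ℂ → ℂ}

lemma norm_prod_inv_one_add_le_one {a : ι → ℂ} (ha : ∀ i, 0 ≤ (a i).re) :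
    ‖∏ i, (1 + a i)⁻¹‖ ≤ 1 := by
  rw [norm_prod]
  refine Finset.prod_le_one (fun i _ => norm_nonneg _) fun i _ => ?_
  rw [norm_inv]
  exact inv_le_one_of_one_le₀ (one_le_norm_one_add (ha i))

lemma prod_one_add_norm_mul_norm_prod_inv_le {a : ι → ℂ} (ha : ∀ i, 0 ≤ (a i).re) {δ : ℝ}
    (hδ : 0 < δ) :
    (∏ i, (1 + ‖a i‖)) * ‖∏ i, (1 + δ * a i)⁻¹‖ ≤ (1 + δ⁻¹) ^ Fintype.card ι := by
  rw [norm_prod, ← Finset.prod_mul_distrib, ← Finset.card_univ, ← Finset.prod_const]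
  refine Finset.prod_le_prod (fun i _ => by positivity) fun i _ => ?_
  have hre : 0 ≤ ((δ : ℂ) * a i).re := by simpa using mul_nonneg hδ.le (ha i)
  have hnorm : δ * ‖a i‖ ≤ ‖1 + δ * a i‖ := by
    simpa [abs_of_pos hδ] using norm_le_norm_one_add hre
  rw [norm_inv, ← div_eq_mul_inv,
    div_le_iff₀ (one_pos.trans_le (one_le_norm_one_add hre)), add_mul, one_mul]
  refine add_le_add (one_le_norm_one_add hre) ?_
  rwa [inv_mul_eq_div, le_div_iff₀' hδ]

lemma re_ofReal_mul_nonneg {δ : ℝ} {a : ℂ} (hδ : 0 ≤ δ) (ha : 0 ≤ a.re) :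
    0 ≤ ((δ : ℂ) * a).re := by
  simpa using mul_nonneg hδ ha

lemma differentiableOn_prod_inv_one_add_mul (hA : ∀ i, DifferentiableOn ℂ (A i) (ball 0 1))
    (hre : ∀ i, ∀ z ∈ ball (0 : ℂ) 1, 0 ≤ (A i z).re) {δ : ℝ} (hδ : 0 ≤ δ) :
    DifferentiableOn ℂ (fun z => ∏ i, (1 + δ * A i z)⁻¹) (ball 0 1) :=
  DifferentiableOn.fun_finsetProd fun i _ => (((hA i).const_mul _).const_add 1).fun_inv
    fun z hz => one_add_ne_zero (re_ofReal_mul_nonneg hδ (hre i z hz))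

lemma tendsto_prod_inv_one_add_div (a : ι → ℂ) :
    Tendsto (fun n : ℕ => ∏ i, (1 + ((1 / (n + 1) : ℝ) : ℂ) * a i)⁻¹) atTop (𝓝 1) := by
  have hδ : Tendsto (fun n : ℕ => ((1 / (n + 1) : ℝ) : ℂ)) atTop (𝓝 0) := by
    rw [← Complex.ofReal_zero]
    exact (Complex.continuous_ofReal.tendsto 0).comp tendsto_one_div_add_atTop_nhds_zero_nat
  simpa using tendsto_finsetProd Finset.univ fun i _ =>
    ((hδ.mul_const (a i)).const_add 1).inv₀ (by simp)

lemma norm_mul_prod_inv_one_add_le {a : ι → ℂ} (ha : ∀ i, 0 ≤ (a i).re) {w : ℂ} {C : ℝ}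
    (hw : ‖w‖ ≤ C * ∏ i, (1 + ‖a i‖)) {δ : ℝ} (hδ : 0 < δ) :
    ‖w * ∏ i, (1 + δ * a i)⁻¹‖ ≤ C * (1 + δ⁻¹) ^ Fintype.card ι := by
  have hC : 0 ≤ C := nonneg_of_mul_nonneg_left ((norm_nonneg _).trans hw)
    (Finset.prod_pos fun i _ => by positivity)
  rw [norm_mul]
  refine (mul_le_mul_of_nonneg_right hw (norm_nonneg _)).trans ?_
  rw [mul_assoc]
  exact mul_le_mul_of_nonneg_left (prod_one_add_norm_mul_norm_prod_inv_le ha hδ) hC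

/-- Holomorphic functions on the unit disc dominated by a finite product of factors `1 + ‖A i‖`,
where each `A i` is holomorphic of nonnegative real part. This is a subalgebra of the Smirnov class,
large enough to contain the functions with boundary values in `L¹` that occur below. -/
structure IsSmirnov (H : ℂ → ℂ) : Prop where
  differentiableOn : DifferentiableOn ℂ H (ball 0 1)
  exists_dominating : ∃ (ι : Type) (_ : Fintype ι) (A : ι → ℂ → ℂ) (C : ℝ),
    (∀ i, DifferentiableOn ℂ (A i) (ball 0 1)) ∧ (∀ i, ∀ z ∈ ball (0 : ℂ) 1, 0 ≤ (A i z).re) ∧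
      ∀ z ∈ ball (0 : ℂ) 1, ‖H z‖ ≤ C * ∏ i, (1 + ‖A i z‖)

namespace IsSmirnov

variable {H H₁ H₂ : ℂ → ℂ}

lemma of_bounded (hH : DifferentiableOn ℂ H (ball 0 1)) {C : ℝ}
    (hC : ∀ z ∈ ball (0 : ℂ) 1, ‖H z‖ ≤ C) : IsSmirnov H :=
  ⟨hH, Empty, inferInstance, Empty.elim, C, by simp, by simp, by simpa using hC⟩

lemma const (c : ℂ) : IsSmirnov fun _ => c :=
  of_bounded (differentiableOn_const c) fun _ _ => le_rfl

lemma of_re_nonneg (hH : DifferentiableOn ℂ H (ball 0 1))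
    (hre : ∀ z ∈ ball (0 : ℂ) 1, 0 ≤ (H z).re) : IsSmirnov H :=
  ⟨hH, Unit, inferInstance, fun _ => H, 1, fun _ => hH, fun _ => hre, by simp⟩

lemma mul (h₁ : IsSmirnov H₁) (h₂ : IsSmirnov H₂) : IsSmirnov fun z => H₁ z * H₂ z := by
  obtain ⟨hd₁, ι₁, _, A₁, C₁, hA₁, hre₁, hC₁⟩ := h₁
  obtain ⟨hd₂, ι₂, _, A₂, C₂, hA₂, hre₂, hC₂⟩ := h₂
  refine ⟨hd₁.mul hd₂, ι₁ ⊕ ι₂, inferInstance, Sum.elim A₁ A₂, C₁ * C₂, Sum.forall.2 ⟨hA₁, hA₂⟩,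
    Sum.forall.2 ⟨hre₁, hre₂⟩, fun z hz => ?_⟩
  simp only [Fintype.prod_sum_type, Sum.elim_inl, Sum.elim_inr, norm_mul]
  rw [mul_mul_mul_comm]
  exact mul_le_mul (hC₁ z hz) (hC₂ z hz) (norm_nonneg _) ((norm_nonneg _).trans (hC₁ z hz))

lemma add (h₁ : IsSmirnov H₁) (h₂ : IsSmirnov H₂) : IsSmirnov fun z => H₁ z + H₂ z := by
  obtain ⟨hd₁, ι₁, _, A₁, C₁, hA₁, hre₁, hC₁⟩ := h₁
  obtain ⟨hd₂, ι₂, _, A₂, C₂, hA₂, hre₂, hC₂⟩ := h₂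
  refine ⟨hd₁.add hd₂, ι₁ ⊕ ι₂, inferInstance, Sum.elim A₁ A₂, C₁ + C₂, Sum.forall.2 ⟨hA₁, hA₂⟩,
    Sum.forall.2 ⟨hre₁, hre₂⟩, fun z hz => ?_⟩
  simp only [Fintype.prod_sum_type, Sum.elim_inl, Sum.elim_inr]
  have hP₁ : 1 ≤ ∏ i, (1 + ‖A₁ i z‖) := Finset.one_le_prod fun i => by simp
  have hP₂ : 1 ≤ ∏ i, (1 + ‖A₂ i z‖) := Finset.one_le_prod fun i => by simp
  have h₁ := (norm_nonneg _).trans (hC₁ z hz)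
  have h₂ := (norm_nonneg _).trans (hC₂ z hz)
  calc ‖H₁ z + H₂ z‖ ≤ C₁ * ∏ i, (1 + ‖A₁ i z‖) + C₂ * ∏ i, (1 + ‖A₂ i z‖) :=
        norm_add_le_of_le (hC₁ z hz) (hC₂ z hz)
    _ ≤ C₁ * (∏ i, (1 + ‖A₁ i z‖)) * ∏ i, (1 + ‖A₂ i z‖) +
        C₂ * (∏ i, (1 + ‖A₂ i z‖)) * ∏ i, (1 + ‖A₁ i z‖) :=
      add_le_add (le_mul_of_one_le_right h₁ hP₂) (le_mul_of_one_le_right h₂ hP₁)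
    _ = _ := by ring

lemma congr (h₁ : IsSmirnov H₁) (h : EqOn H₂ H₁ (ball 0 1)) : IsSmirnov H₂ := by
  obtain ⟨hd, ι, _, A, C, hA, hre, hC⟩ := h₁
  exact ⟨hd.congr h, ι, inferInstance, A, C, hA, hre,
    fun z hz => by simpa only [h hz] using hC z hz⟩

theorem exists_ae_tendsto_radial (hH : IsSmirnov H) :
    ∃ h : ℝ → ℂ, ∀ᵐ θ ∂μT,
      Tendsto (fun r : ℝ => H (r * circleMap 0 1 θ)) (𝓝[<] 1) (𝓝 (h θ)) := by
  obtain ⟨hH, ι, _, A, C, hA, hre, hC⟩ := hH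
  choose a ha using fun i => exists_ae_tendsto_radial_of_re_nonneg (hA i) (hre i)
  set M : ℂ → ℂ := fun z => ∏ i, (1 + ((1 : ℝ) : ℂ) * A i z)⁻¹
  have hM : DifferentiableOn ℂ M (ball 0 1) :=
    differentiableOn_prod_inv_one_add_mul hA hre zero_le_one
  have hbdd : ∀ᵐ θ ∂μT, ∃ c, Tendsto (fun r : ℝ => H (r * circleMap 0 1 θ) *
      M (r * circleMap 0 1 θ)) (𝓝[<] 1) (𝓝 c) := ae_restrict_of_ae
    (ae_exists_tendsto_radial_of_bounded (G := fun z => H z * M z) (hH.mul hM)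
      fun z hz => norm_mul_prod_inv_one_add_le (hre · z hz) (hC z hz) one_pos)
  refine ⟨fun θ => limUnder (𝓝[<] 1) fun r : ℝ => H (r * circleMap 0 1 θ), ?_⟩
  filter_upwards [hbdd, ae_all_iff.2 ha] with θ ⟨c, hc⟩ hθ
  have hne {w : ℂ} (hw : 0 ≤ w.re) : 1 + ((1 : ℝ) : ℂ) * w ≠ 0 :=
    one_add_ne_zero (re_ofReal_mul_nonneg zero_le_one hw)
  have hMlim : Tendsto (fun r : ℝ => M (r * circleMap 0 1 θ)) (𝓝[<] 1)
      (𝓝 (∏ i, (1 + ((1 : ℝ) : ℂ) * a i θ)⁻¹)) := tendsto_finsetProd _ fun i _ =>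
    (((hθ i).2.const_mul _).const_add 1).inv₀ (hne (hθ i).1)
  refine tendsto_nhds_limUnder ⟨_, (hc.div hMlim (Finset.prod_ne_zero_iff.2 fun i _ =>
    inv_ne_zero (hne (hθ i).1))).congr' ?_⟩
  filter_upwards [Ioo_mem_nhdsLT one_pos] with r hr
  exact mul_div_cancel_right₀ _ (Finset.prod_ne_zero_iff.2 fun i _ => inv_ne_zero
    (hne (hre i _ (ofReal_mul_circleMap_mem_ball hr θ))))

/-- A form of **Smirnov's theorem**. The multipliers `∏ (1 + A i / n)⁻¹` make `H` bounded, and they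
tend boundedly to `1`. -/
theorem integral_radialLimit_mul (hH : IsSmirnov H) (hk : IsReproducingKernel k ζ) {h : ℝ → ℂ}
    (hh : Integrable h μT)
    (hlim : ∀ᵐ θ ∂μT, Tendsto (fun r : ℝ => H (r * circleMap 0 1 θ)) (𝓝[<] 1) (𝓝 (h θ))) :
    ∫ θ, h θ * k θ ∂μT = 2 * Real.pi * H ζ := by
  obtain ⟨hH, ι, _, A, C, hA, hre, hC⟩ := hH
  choose a ha using fun i => exists_ae_tendsto_radial_of_re_nonneg (hA i) (hre i)
  have ha : ∀ᵐ θ ∂μT, ∀ i, 0 ≤ (a i θ).re ∧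
      Tendsto (fun r : ℝ => A i (r * circleMap 0 1 θ)) (𝓝[<] 1) (𝓝 (a i θ)) := ae_all_iff.2 ha
  have hδ (n : ℕ) : 0 < (1 / (n + 1) : ℝ) := Nat.one_div_pos_of_nat
  set m : ℕ → ℝ → ℂ := fun n θ => ∏ i, (1 + ((1 / (n + 1) : ℝ) : ℂ) * a i θ)⁻¹
  set M : ℕ → ℂ → ℂ := fun n z => ∏ i, (1 + ((1 / (n + 1) : ℝ) : ℂ) * A i z)⁻¹
  have hM (n : ℕ) : DifferentiableOn ℂ (M n) (ball 0 1) :=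
    differentiableOn_prod_inv_one_add_mul hA hre (hδ n).le
  have hm (n : ℕ) : ∀ᵐ θ ∂μT,
      Tendsto (fun r : ℝ => M n (r * circleMap 0 1 θ)) (𝓝[<] 1) (𝓝 (m n θ)) :=
    ha.mono fun θ hθ => tendsto_finsetProd _ fun i _ => (((hθ i).2.const_mul _).const_add 1).inv₀
      (one_add_ne_zero (re_ofReal_mul_nonneg (hδ n).le (hθ i).1))
  have hbdd (n : ℕ) : ∫ θ, h θ * m n θ * k θ ∂μT = 2 * Real.pi * (H ζ * M n ζ) :=
    hk.integral_radialLimit_mul_of_bounded (hH.mul (hM n))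
      (fun z hz => norm_mul_prod_inv_one_add_le (hre · z hz) (hC z hz) (hδ n))
      (hlim.mp ((hm n).mono fun θ h₂ h₁ => h₁.mul h₂))
  have hint : Tendsto (fun n => ∫ θ, h θ * m n θ * k θ ∂μT) atTop
      (𝓝 (∫ θ, h θ * k θ ∂μT)) := by
    refine tendsto_integral_of_dominated_convergence (fun θ => ‖h θ * k θ‖) (fun n => ?_)
      (hk.integrable_mul hh).norm (fun n => ?_) (ae_of_all _ fun θ => ?_)
    · exact (hh.1.mul (aestronglyMeasurable_radialLimit (hM n) (hm n))).mul
        hk.continuous.aestronglyMeasurable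
    · filter_upwards [ha] with θ hθ
      rw [mul_right_comm, norm_mul _ (m n θ)]
      exact mul_le_of_le_one_right (norm_nonneg _) (norm_prod_inv_one_add_le_one fun i =>
        re_ofReal_mul_nonneg (hδ n).le (hθ i).1)
    · simpa only [mul_one] using
        ((tendsto_prod_inv_one_add_div (a · θ)).const_mul (h θ)).mul_const (k θ)
  have hval := ((tendsto_prod_inv_one_add_div (A · ζ)).const_mul (H ζ)).const_mul
    (2 * Real.pi : ℂ)
  rw [mul_one] at hval
  exact tendsto_nhds_unique (hint.congr hbdd) hval

end IsSmirnov

end Smirnov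

section ApproximateIdentity

open Metric

variable {X : Type*} [PseudoMetricSpace X] [MeasurableSpace X]
  {ν : Measure X} [IsFiniteMeasure ν] {t : X} {b : ℝ}

lemma exists_real_closedBall_le_mul
    (hν : Tendsto (fun s => s⁻¹ * ν.real (closedBall t s)) (𝓝[>] 0) (𝓝 0)) :
    ∃ C, ∀ s > 0, s⁻¹ * ν.real (closedBall t s) ≤ C := by
  obtain ⟨δ, hδ, hδ1⟩ := (mem_nhdsGT_iff_exists_Ioo_subset).1
    (hν.eventually_le_const (zero_lt_one' ℝ))
  refine ⟨max 1 (δ⁻¹ * ν.real univ), fun s hs => ?_⟩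
  rcases lt_or_ge s δ with hsδ | hsδ
  · exact le_max_of_le_left (hδ1 ⟨hs, hsδ⟩)
  · refine le_max_of_le_right ?_
    have : (0 : ℝ) < δ := hδ
    gcongr
    · exact measure_ne_top _ _
    · exact subset_univ _

variable [OpensMeasurableSpace X]

lemma integrable_div_max_dist_sq (hb : 0 < b) :
    Integrable (fun x => b / max (dist x t) b ^ 2) ν := by
  have hmax (x : X) : 0 < max (dist x t) b := lt_max_of_lt_right hb
  refine Integrable.of_bound (Continuous.measurable ?_).aestronglyMeasurable (b / b ^ 2)
    (ae_of_all _ fun x => ?_)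
  · exact continuous_const.div (by fun_prop) fun x => (pow_pos (hmax x) 2).ne'
  · have := hmax x
    rw [Real.norm_of_nonneg (by positivity)]
    gcongr
    exact le_max_right _ _

lemma integral_div_max_dist_sq (hb : 0 < b) :
    ∫ x, b / max (dist x t) b ^ 2 ∂ν =
      ∫ σ in Ioc (0 : ℝ) 1, b⁻¹ * ν.real (closedBall t (b / √σ)) := by
  have hmax (x : X) : 0 < max (dist x t) b := lt_max_of_lt_right hb
  have hscale (x : X) : b * (b / max (dist x t) b ^ 2) = (b / max (dist x t) b) ^ 2 := by ring
  have hlayer := ((integrable_div_max_dist_sq (ν := ν) (t := t) hb).const_mul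
    b).integral_eq_integral_Ioc_meas_le (M := 1)
    (ae_of_all _ fun x => by have := hmax x; simp only [Pi.zero_apply]; positivity)
    (ae_of_all _ fun x => by
      simp only [hscale]
      exact pow_le_one₀ (by have := hmax x; positivity)
        ((div_le_one (hmax x)).2 (le_max_right _ _)))
  have hball : ∀ σ ∈ Ioc (0 : ℝ) 1, {x | σ ≤ b * (b / max (dist x t) b ^ 2)} =
      closedBall t (b / √σ) := fun σ ⟨h0, h1⟩ => by
    ext x
    have hσ : 0 < √σ := Real.sqrt_pos.2 h0
    have hσ1 : √σ ≤ 1 := Real.sqrt_le_one.2 h1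
    rw [mem_ofPred_eq, hscale, mem_closedBall, ← Real.sqrt_le_left (by have := hmax x; positivity),
      le_div_comm₀ hσ (hmax x), max_le_iff, and_iff_left (le_div_self hb.le hσ hσ1)]
  rw [setIntegral_congr_fun measurableSet_Ioc fun σ hσ => by
    simp only [hball σ hσ]; rfl, integral_const_mul] at hlayer
  rw [integral_const_mul, ← hlayer, inv_mul_cancel_left₀ hb.ne']

lemma tendsto_integral_div_max_dist_sq
    (hν : Tendsto (fun s => s⁻¹ * ν.real (closedBall t s)) (𝓝[>] 0) (𝓝 0)) :
    Tendsto (fun b => ∫ x, b / max (dist x t) b ^ 2 ∂ν) (𝓝[>] 0) (𝓝 0) := by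
  obtain ⟨C, hC⟩ := exists_real_closedBall_le_mul hν
  have hrescale (b : ℝ) {σ : ℝ} (hσ : 0 < √σ) : b⁻¹ * ν.real (closedBall t (b / √σ)) =
      (b / √σ)⁻¹ * ν.real (closedBall t (b / √σ)) * (√σ)⁻¹ := by
    field_simp
  have hmono : Monotone fun s => ν.real (closedBall t s) := fun s s' h =>
    measureReal_mono (closedBall_subset_closedBall h)
  have hint : IntegrableOn (fun σ : ℝ => C * (√σ)⁻¹) (Ioc 0 1) := by
    have : IntegrableOn (fun σ : ℝ => C * σ ^ (-(1 / 2) : ℝ)) (Ioc 0 1) :=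
      (intervalIntegral.intervalIntegrable_rpow' (by norm_num)).1.const_mul C
    refine this.congr_fun (fun σ hσ => ?_) measurableSet_Ioc
    simp only [Real.rpow_neg hσ.1.le, ← Real.sqrt_eq_rpow]
  have hlim : Tendsto (fun b => ∫ σ in Ioc (0 : ℝ) 1, b⁻¹ * ν.real (closedBall t (b / √σ)))
      (𝓝[>] 0) (𝓝 (∫ _ in Ioc (0 : ℝ) 1, 0)) := by
    refine tendsto_integral_filter_of_dominated_convergence _ (Eventually.of_forall fun b => ?_)
      ?_ hint ?_
    · exact ((hmono.measurable.comp (by fun_prop : Measurable fun σ => b / √σ)).const_mul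
        _).aestronglyMeasurable
    · filter_upwards [self_mem_nhdsWithin] with b hb
      filter_upwards [ae_restrict_mem measurableSet_Ioc] with σ hσ
      have hb : 0 < b := hb
      have hσ0 := Real.sqrt_pos.2 hσ.1
      rw [Real.norm_of_nonneg (by positivity), hrescale b hσ0]
      gcongr
      exact hC _ (by positivity)
    · filter_upwards [ae_restrict_mem measurableSet_Ioc] with σ hσ
      have hσ0 := Real.sqrt_pos.2 hσ.1
      have hdiv : Tendsto (fun b => b / √σ) (𝓝[>] 0) (𝓝[>] 0) := by
        refine tendsto_nhdsWithin_iff.2 ⟨?_, ?_⟩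
        · exact ((by fun_prop : Continuous fun b => b / √σ).tendsto' 0 0 (zero_div _)).mono_left
            nhdsWithin_le_nhds
        · filter_upwards [self_mem_nhdsWithin] with b hb using div_pos hb hσ0
      simpa only [hrescale _ hσ0, zero_mul, Function.comp_apply] using
        (hν.comp hdiv).mul_const (√σ)⁻¹
  rw [integral_zero] at hlim
  refine hlim.congr' ?_
  filter_upwards [self_mem_nhdsWithin] with b hb using (integral_div_max_dist_sq hb).symm

end ApproximateIdentity

section LebesguePoint

open Metric

variable {u : ℝ → ℂ} {t : ℝ}

instance isFiniteMeasure_μI : IsFiniteMeasure μI := by unfold μI; infer_instance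

/-- A Lebesgue point of `u` on `(-1, 1)`, in the strong sense that `u` oscillates little around its
value at the point. The averages are normalised by the radius. -/
def IsLebesguePoint (u : ℝ → ℂ) (t : ℝ) : Prop :=
  Tendsto (fun s => s⁻¹ * ∫ x in closedBall t s, ‖u x - u t‖ ∂μI) (𝓝[>] 0) (𝓝 0)

lemma ae_isLebesguePoint (hu : Integrable u μI) : ∀ᵐ t ∂μI, IsLebesguePoint u t := by
  have hind : Integrable ((Ioo (-1 : ℝ) 1).indicator u) :=
    IntegrableOn.integrable_indicator hu measurableSet_Ioo
  refine (ae_restrict_iff' measurableSet_Ioo).2 ?_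
  filter_upwards [IsUnifLocDoublingMeasure.ae_tendsto_average_norm_sub volume
    hind.locallyIntegrable 1] with t ht htI
  have havg := (ht (l := 𝓝[>] (0 : ℝ)) (fun _ => t) id tendsto_id (by
    filter_upwards [self_mem_nhdsWithin] with s hs
    exact mem_closedBall_self (by simpa using (mem_Ioi.1 hs).le))).const_mul 2
  rw [mul_zero] at havg
  refine squeeze_zero' ?_ ?_ havg
  · filter_upwards [self_mem_nhdsWithin] with s hs
    have : 0 < s := hs
    positivity
  · filter_upwards [self_mem_nhdsWithin] with s hs
    have hs : 0 < s := hs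
    have hle : ∫ x in closedBall t s, ‖u x - u t‖ ∂μI ≤
        ∫ x in closedBall t s,
          ‖(Ioo (-1 : ℝ) 1).indicator u x - (Ioo (-1 : ℝ) 1).indicator u t‖ := by
      rw [μI, Measure.restrict_restrict measurableSet_closedBall]
      rw [setIntegral_congr_fun (measurableSet_closedBall.inter measurableSet_Ioo) fun x hx => by
        rw [← indicator_of_mem hx.2 u, ← indicator_of_mem htI u]]
      refine setIntegral_mono_set ?_ (ae_of_all _ fun x => norm_nonneg _)
        inter_subset_left.eventuallyLE
      exact (hind.integrableOn.sub (integrableOn_const (by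
        rw [Real.volume_closedBall]; exact ENNReal.ofReal_ne_top))).norm
    rw [setAverage_eq, smul_eq_mul, id, Real.volume_real_closedBall hs.le, mul_inv, ← mul_assoc,
      mul_inv_cancel_left₀ two_ne_zero]
    gcongr

lemma IsLebesguePoint.tendsto_integral_norm_sub_mul (hu : Integrable u μI)
    (ht : IsLebesguePoint u t) :
    Tendsto (fun b => ∫ x, ‖u x - u t‖ * (b / max |x - t| b ^ 2) ∂μI) (𝓝[>] 0) (𝓝 0) := by
  have hut : Integrable (fun x => u x - u t) μI := hu.sub (integrable_const _)
  have hfin : IsFiniteMeasure (μI.withDensity fun x => ‖u x - u t‖ₑ) :=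
    isFiniteMeasure_withDensity hut.2.ne
  have hball (s : ℝ) : (μI.withDensity fun x => ‖u x - u t‖ₑ).real (closedBall t s) =
      ∫ x in closedBall t s, ‖u x - u t‖ ∂μI := by
    rw [Measure.real, withDensity_apply _ measurableSet_closedBall,
      integral_norm_eq_lintegral_enorm hut.1.restrict]
  have hlim := tendsto_integral_div_max_dist_sq (ν := μI.withDensity fun x => ‖u x - u t‖ₑ)
    (t := t) (by simp only [hball]; exact ht)
  refine hlim.congr fun b => ?_
  rw [integral_withDensity_eq_integral_toReal_smul₀ hut.1.enorm
    (ae_of_all _ fun x => enorm_lt_top)]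
  simp only [toReal_enorm, smul_eq_mul, Real.dist_eq]

end LebesguePoint

section Plemelj

variable {u : ℝ → ℂ} {z : ℂ} {t ε : ℝ}

/-- The kernel `1 / (x - t)`, cut off at distance `ε` from the singularity. -/
def truncatedKernel (t ε x : ℝ) : ℂ :=
  {x : ℝ | ε ≤ |x - t|}.indicator (fun x => ((x : ℂ) - t)⁻¹) x

/-- The integral whose limit as `ε → 0⁺` is the principal value `FHT u t`. -/
def truncatedHilbert (u : ℝ → ℂ) (t ε : ℝ) : ℂ :=
  (Real.pi : ℂ)⁻¹ * ∫ x, u x * truncatedKernel t ε x ∂μI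

/-- The Cauchy transform of `u` on `(-1, 1)`. -/
def cauchyTransform (u : ℝ → ℂ) (z : ℂ) : ℂ :=
  (Real.pi : ℂ)⁻¹ * ∫ x, u x * ((x : ℂ) - z)⁻¹ ∂μI

lemma measurableSet_le_abs_sub (t ε : ℝ) : MeasurableSet {x : ℝ | ε ≤ |x - t|} :=
  measurableSet_le measurable_const (by fun_prop)

lemma FHT_eq_limUnder_truncatedHilbert (u : ℝ → ℂ) (t : ℝ) :
    FHT u t = limUnder (𝓝[>] 0) (truncatedHilbert u t) := by
  have hset (ε : ℝ) : {x : ℝ | x ∈ Ioo (-1 : ℝ) 1 ∧ ε ≤ |x - t|} =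
      Ioo (-1) 1 ∩ {x : ℝ | ε ≤ |x - t|} := rfl
  have hmul (ε x : ℝ) : u x * truncatedKernel t ε x =
      {x : ℝ | ε ≤ |x - t|}.indicator (fun x => u x / ((x : ℂ) - t)) x := by
    simp only [truncatedKernel, div_eq_mul_inv]
    exact (indicator_mul_right _ u _).symm
  unfold FHT
  congr 1
  ext ε
  rw [hset, ← setIntegral_indicator (measurableSet_le_abs_sub t ε), truncatedHilbert]
  simp only [hmul, μI]

lemma FHT_eq_of_tendsto {l : ℂ} (h : Tendsto (truncatedHilbert u t) (𝓝[>] 0) (𝓝 l)) :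
    FHT u t = l := by
  rw [FHT_eq_limUnder_truncatedHilbert]
  exact h.limUnder_eq

lemma norm_truncatedKernel_le (hε : 0 < ε) (x : ℝ) : ‖truncatedKernel t ε x‖ ≤ ε⁻¹ := by
  by_cases h : ε ≤ |x - t|
  · rw [truncatedKernel, indicator_of_mem (by exact h), norm_inv, ← Complex.ofReal_sub,
      Complex.norm_real]
    exact inv_anti₀ hε h
  · rw [truncatedKernel, indicator_of_notMem (by exact h), norm_zero]
    positivity

lemma le_norm_ofReal_sub_of_im_eq (hε : 0 < ε) (hz : z.im = -ε) (x : ℝ) : ε ≤ ‖(x : ℂ) - z‖ := by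
  simpa [hz, abs_of_pos hε] using Complex.abs_im_le_norm ((x : ℂ) - z)

lemma integrable_mul_truncatedKernel (hu : Integrable u μI) (hε : 0 < ε) :
    Integrable (fun x => u x * truncatedKernel t ε x) μI :=
  hu.mul_bdd (c := ε⁻¹)
    (Measurable.indicator (by fun_prop) (measurableSet_le_abs_sub t ε)).aestronglyMeasurable
    (ae_of_all _ (norm_truncatedKernel_le hε))

lemma integrable_mul_inv_ofReal_sub (hu : Integrable u μI) (hz : z.im ≠ 0) :
    Integrable (fun x => u x * ((x : ℂ) - z)⁻¹) μI := by
  refine hu.mul_bdd (c := |z.im|⁻¹) (Measurable.aestronglyMeasurable (by fun_prop))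
    (ae_of_all _ fun x => ?_)
  rw [norm_inv]
  exact inv_anti₀ (abs_pos.2 hz) (by simpa using Complex.abs_im_le_norm ((x : ℂ) - z))

lemma integrable_mul_kernel_sub (hu : Integrable u μI) (hε : 0 < ε) (hz : z.im ≠ 0) :
    Integrable (fun x => u x * (truncatedKernel t ε x - ((x : ℂ) - z)⁻¹)) μI := by
  simp only [mul_sub]
  exact (integrable_mul_truncatedKernel hu hε).sub (integrable_mul_inv_ofReal_sub hu hz)

lemma truncatedHilbert_sub_cauchyTransform (hu : Integrable u μI) (hε : 0 < ε) (hz : z.im ≠ 0) :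
    truncatedHilbert u t ε - cauchyTransform u z =
      (Real.pi : ℂ)⁻¹ * ∫ x, u x * (truncatedKernel t ε x - ((x : ℂ) - z)⁻¹) ∂μI := by
  simp only [truncatedHilbert, cauchyTransform, mul_sub]
  rw [integral_sub (integrable_mul_truncatedKernel hu hε) (integrable_mul_inv_ofReal_sub hu hz),
    mul_sub]

lemma norm_truncatedKernel_sub_le (hε : 0 < ε) (hz : z.im = -ε) (hzt : |z.re - t| ≤ ε) (x : ℝ) :
    ‖truncatedKernel t ε x - ((x : ℂ) - z)⁻¹‖ ≤ 6 * (ε / max |x - t| ε ^ 2) := by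
  have hxz := le_norm_ofReal_sub_of_im_eq hε hz x
  have hp : 0 < ‖(x : ℂ) - z‖ := hε.trans_le hxz
  have htz : ‖(t : ℂ) - z‖ ≤ 2 * ε := by
    have := Complex.norm_le_abs_re_add_abs_im ((t : ℂ) - z)
    simp only [Complex.sub_re, Complex.sub_im, Complex.ofReal_re, Complex.ofReal_im, hz,
      abs_sub_comm t, zero_sub, neg_neg, abs_of_pos hε] at this
    linarith
  unfold truncatedKernel
  rcases le_or_gt ε |x - t| with h | h
  · have hn : ‖(x : ℂ) - t‖ = |x - t| := by rw [← Complex.ofReal_sub, Complex.norm_real]; rfl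
    have hq : 0 < |x - t| := hε.trans_le h
    have hxt : (x : ℂ) - t ≠ 0 := norm_pos_iff.1 (hn ▸ hq)
    have hcmp : |x - t| ≤ 3 * ‖(x : ℂ) - z‖ := by
      have := norm_sub_le ((x : ℂ) - z) (t - z)
      rw [sub_sub_sub_cancel_right, hn] at this
      linarith
    rw [indicator_of_mem (by exact h), max_eq_left h, inv_sub_inv hxt (norm_pos_iff.1 hp),
      sub_sub_sub_cancel_left, norm_div, norm_mul, hn, mul_div_assoc',
      div_le_div_iff₀ (by positivity) (by positivity)]
    calc ‖(t : ℂ) - z‖ * |x - t| ^ 2 = ‖(t : ℂ) - z‖ * |x - t| * |x - t| := by ring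
      _ ≤ 2 * ε * |x - t| * (3 * ‖(x : ℂ) - z‖) := by gcongr
      _ = _ := by ring
  · rw [indicator_of_notMem (by exact h.not_ge), max_eq_right h.le, zero_sub, norm_neg, norm_inv]
    calc ‖(x : ℂ) - z‖⁻¹ ≤ ε⁻¹ := inv_anti₀ hε hxz
      _ ≤ 6 * ε⁻¹ := le_mul_of_one_le_left (by positivity) (by norm_num)
      _ = 6 * (ε / ε ^ 2) := by field_simp

lemma integral_truncatedKernel (hε : 0 < ε) (h1 : ε < 1 - t) (h2 : ε < 1 + t) :
    ∫ x, truncatedKernel t ε x ∂μI = ((Real.log (1 - t) - Real.log (1 + t) : ℝ) : ℂ) := by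
  have hset : Ioo (-1 : ℝ) 1 ∩ {x : ℝ | ε ≤ |x - t|} = Ioc (-1) (t - ε) ∪ Ico (t + ε) 1 := by
    ext x
    simp only [mem_inter_iff, mem_ofPred_eq, mem_Ioo, mem_union, mem_Ioc, mem_Ico, le_abs]
    grind
  have hdisj : Disjoint (Ioc (-1) (t - ε)) (Ico (t + ε) 1) :=
    disjoint_left.2 fun x hx hx' => by linarith [hx.2, hx'.1]
  have hleft : ∫ x in Ioc (-1) (t - ε), (x - t)⁻¹ = Real.log (ε / (1 + t)) := by
    rw [← intervalIntegral.integral_of_le (by linarith),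
      intervalIntegral.integral_comp_sub_right (fun x => x⁻¹) t,
      integral_inv_of_neg (by linarith) (by linarith), ← neg_div_neg_eq]
    congr 2 <;> ring
  have hright : ∫ x in Ico (t + ε) 1, (x - t)⁻¹ = Real.log ((1 - t) / ε) := by
    rw [integral_Ico_eq_integral_Ioc, ← intervalIntegral.integral_of_le (by linarith),
      intervalIntegral.integral_comp_sub_right (fun x => x⁻¹) t,
      integral_inv_of_pos (by linarith) (by linarith), add_sub_cancel_left]
  have hint {s : Set ℝ} {a b : ℝ} (hs : s ⊆ Icc a b) (hab : t ∉ Icc a b) :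
      IntegrableOn (fun x => (x - t)⁻¹) s :=
    (ContinuousOn.integrableOn_Icc (ContinuousOn.inv₀ (by fun_prop) fun x hx =>
      sub_ne_zero.2 (ne_of_mem_of_not_mem hx hab))).mono_set hs
  have hreal (x : ℝ) : ((x : ℂ) - t)⁻¹ = (((x - t)⁻¹ : ℝ) : ℂ) := by push_cast; rfl
  simp only [truncatedKernel, hreal]
  rw [μI, setIntegral_indicator (measurableSet_le_abs_sub t ε), integral_complex_ofReal, hset,
    setIntegral_union hdisj measurableSet_Ico
      (hint Ioc_subset_Icc_self fun h => by linarith [h.2])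
      (hint Ico_subset_Icc_self fun h => by linarith [h.1]), hleft, hright,
    Real.log_div (by linarith) (by linarith), Real.log_div (by linarith) (by linarith)]
  congr 1
  ring

lemma integral_inv_ofReal_sub (hz : z.im < 0) :
    ∫ x, ((x : ℂ) - z)⁻¹ ∂μI = Complex.log (1 - z) - Complex.log (-1 - z) := by
  have hne (x : ℝ) : (x : ℂ) - z ∈ Complex.slitPlane := Or.inr (by simp [hz.ne])
  rw [μI, ← integral_Ioc_eq_integral_Ioo, ← intervalIntegral.integral_of_le (by norm_num),
    intervalIntegral.integral_eq_sub_of_hasDerivAt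
      (f := fun x : ℝ => Complex.log ((x : ℂ) - z)) (fun x _ => ?_)]
  · norm_num
  · exact (continuous_iff_continuousAt.2 fun x => ContinuousAt.inv₀ (by fun_prop)
      (Complex.slitPlane_ne_zero (hne x))).intervalIntegrable _ _
  · simpa using (Complex.ofRealCLM.hasDerivAt.sub_const z).clog_real (hne x)

variable {ι : Type*} {l : Filter ι} {z : ι → ℂ} {ε : ι → ℝ}

lemma tendsto_integral_inv_ofReal_sub (ht : t ∈ Ioo (-1 : ℝ) 1) (hz : Tendsto z l (𝓝 (t : ℂ)))
    (him : ∀ᶠ r in l, (z r).im < 0) :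
    Tendsto (fun r => ∫ x, ((x : ℂ) - z r)⁻¹ ∂μI) l
      (𝓝 (((Real.log (1 - t) - Real.log (1 + t) : ℝ) : ℂ) - Real.pi * Complex.I)) := by
  have h1 : (0 : ℝ) < 1 - t := by linarith [ht.2]
  have h2 : (0 : ℝ) < 1 + t := by linarith [ht.1]
  have hlog₁ : Tendsto (fun r => Complex.log (1 - z r)) l (𝓝 (Real.log (1 - t) : ℂ)) := by
    rw [Complex.ofReal_log h1.le]
    push_cast
    exact (continuousAt_clog (Or.inl (by simpa using h1))).tendsto.comp
      (tendsto_const_nhds.sub hz)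
  -- `-1 - z` approaches the branch cut of the logarithm from above.
  have hlog₂ : Tendsto (fun r => Complex.log (-1 - z r)) l
      (𝓝 (Real.log (1 + t) + Real.pi * Complex.I)) := by
    have hnorm : ‖(-1 - t : ℂ)‖ = 1 + t := by
      rw [← norm_neg, show (-(-1 - t : ℂ)) = ((1 + t : ℝ) : ℂ) by push_cast; ring,
        Complex.norm_of_nonneg h2.le]
    rw [← hnorm]
    refine (Complex.tendsto_log_nhdsWithin_im_nonneg_of_re_neg_of_im_zero (z := -1 - t)
      (by simp; linarith) (by simp)).comp (tendsto_nhdsWithin_iff.2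
        ⟨tendsto_const_nhds.sub hz, ?_⟩)
    filter_upwards [him] with r hr
    simpa using hr.le
  convert (hlog₁.sub hlog₂).congr' ?_ using 2
  · push_cast; ring
  · filter_upwards [him] with r hr using (integral_inv_ofReal_sub hr).symm

lemma IsLebesguePoint.tendsto_integral_sub_mul_kernel (hu : Integrable u μI)
    (ht : IsLebesguePoint u t) (hε : Tendsto ε l (𝓝[>] 0))
    (hz : ∀ᶠ r in l, (z r).im = -ε r ∧ |(z r).re - t| ≤ ε r) :
    Tendsto (fun r => ∫ x, (u x - u t) * (truncatedKernel t (ε r) x - ((x : ℂ) - z r)⁻¹) ∂μI) l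
      (𝓝 0) := by
  have hlim := ((ht.tendsto_integral_norm_sub_mul hu).comp hε).const_mul 6
  rw [mul_zero] at hlim
  refine squeeze_zero_norm' ?_ hlim
  filter_upwards [hz, hε.eventually self_mem_nhdsWithin] with r hr hp
  rw [Function.comp_apply, ← integral_const_mul]
  refine norm_integral_le_of_norm_le (Integrable.const_mul ?_ _) (ae_of_all _ fun x => ?_)
  · have hmax (x : ℝ) : 0 < max |x - t| (ε r) := lt_max_of_lt_right hp
    refine (hu.sub (integrable_const (u t))).norm.mul_bdd (c := ε r / ε r ^ 2)
      (Continuous.aestronglyMeasurable (continuous_const.div (by fun_prop) fun x =>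
        (pow_pos (hmax x) 2).ne')) (ae_of_all _ fun x => ?_)
    have : 0 < ε r := hp
    have := hmax x
    rw [Real.norm_of_nonneg (by positivity)]
    gcongr
    exact le_max_right _ _
  · rw [norm_mul, mul_left_comm]
    gcongr
    exact norm_truncatedKernel_sub_le hp hr.1 hr.2 x

lemma tendsto_ofReal_of_im_eq (hε : Tendsto ε l (𝓝[>] 0))
    (hz : ∀ᶠ r in l, (z r).im = -ε r ∧ |(z r).re - t| ≤ ε r) : Tendsto z l (𝓝 (t : ℂ)) := by
  have hε0 : Tendsto ε l (𝓝 0) := hε.mono_right nhdsWithin_le_nhds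
  refine tendsto_iff_norm_sub_tendsto_zero.2 (squeeze_zero'
    (Eventually.of_forall fun r => norm_nonneg _) ?_ (by simpa using hε0.const_mul 2))
  filter_upwards [hz, hε.eventually self_mem_nhdsWithin] with r hr (hp : 0 < ε r)
  refine (Complex.norm_le_abs_re_add_abs_im _).trans ?_
  simp only [Complex.sub_re, Complex.sub_im, Complex.ofReal_re, Complex.ofReal_im, hr.1,
    sub_zero, abs_neg, abs_of_pos hp]
  linarith [hr.2]

lemma tendsto_integral_truncatedKernel_sub (ht : t ∈ Ioo (-1 : ℝ) 1)
    (hε : Tendsto ε l (𝓝[>] 0)) (hz : ∀ᶠ r in l, (z r).im = -ε r ∧ |(z r).re - t| ≤ ε r) :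
    Tendsto (fun r => ∫ x, (truncatedKernel t (ε r) x - ((x : ℂ) - z r)⁻¹) ∂μI) l
      (𝓝 (Real.pi * Complex.I)) := by
  have hε0 : Tendsto ε l (𝓝 0) := hε.mono_right nhdsWithin_le_nhds
  have hpos : ∀ᶠ r in l, 0 < ε r := hε.eventually self_mem_nhdsWithin
  have him : ∀ᶠ r in l, (z r).im < 0 := by
    filter_upwards [hz, hpos] with r hr hp using by linarith [hr.1]
  have hlim := (tendsto_const_nhds (x := ((Real.log (1 - t) - Real.log (1 + t) : ℝ) : ℂ))).sub
    (tendsto_integral_inv_ofReal_sub ht (tendsto_ofReal_of_im_eq hε hz) him)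
  rw [sub_sub_cancel] at hlim
  refine hlim.congr' ?_
  filter_upwards [hpos, him, hε0.eventually_lt_const (sub_pos.2 ht.2),
    hε0.eventually_lt_const (u := 1 + t) (by linarith [ht.1])] with r hp hi h1 h2
  have hone : Integrable (fun _ : ℝ => (1 : ℂ)) μI := integrable_const _
  rw [← integral_truncatedKernel hp h1 h2, ← integral_sub]
  · simpa only [one_mul] using integrable_mul_truncatedKernel hone hp
  · simpa only [one_mul] using integrable_mul_inv_ofReal_sub hone hi.ne

/-- The **Plemelj formula**, for an approach region of aperture one. -/
theorem IsLebesguePoint.tendsto_truncatedHilbert_sub_cauchyTransform (hu : Integrable u μI)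
    (htI : t ∈ Ioo (-1 : ℝ) 1) (ht : IsLebesguePoint u t) (hε : Tendsto ε l (𝓝[>] 0))
    (hz : ∀ᶠ r in l, (z r).im = -ε r ∧ |(z r).re - t| ≤ ε r) :
    Tendsto (fun r => truncatedHilbert u t (ε r) - cauchyTransform u (z r)) l
      (𝓝 (Complex.I * u t)) := by
  have hlim := ((ht.tendsto_integral_sub_mul_kernel hu hε hz).add
    ((tendsto_integral_truncatedKernel_sub htI hε hz).const_mul (u t))).const_mul (Real.pi : ℂ)⁻¹
  have hπ : (Real.pi : ℂ) ≠ 0 := by exact_mod_cast Real.pi_ne_zero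
  rw [show (Real.pi : ℂ)⁻¹ * (0 + u t * (Real.pi * Complex.I)) = Complex.I * u t by
    field_simp; ring] at hlim
  refine hlim.congr' ?_
  filter_upwards [hz, hε.eventually self_mem_nhdsWithin] with r hr hp
  have him : (z r).im ≠ 0 := hr.1 ▸ (neg_neg_of_pos hp).ne
  have hut : Integrable (fun x => u x - u t) μI := hu.sub (integrable_const _)
  rw [truncatedHilbert_sub_cauchyTransform hu hp him, ← integral_const_mul,
    ← integral_add (integrable_mul_kernel_sub hut hp him)
      (integrable_mul_kernel_sub (integrable_const _) hp him)]
  simp only [← add_mul, sub_add_cancel]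

lemma star_truncatedHilbert (u : ℝ → ℂ) (t ε : ℝ) :
    truncatedHilbert (fun x => star (u x)) t ε = star (truncatedHilbert u t ε) := by
  have hk (x : ℝ) : star (truncatedKernel t ε x) = truncatedKernel t ε x := by
    by_cases h : ε ≤ |x - t| <;> simp [truncatedKernel, indicator, h]
  simp only [truncatedHilbert, ← starRingEnd_apply, ← integral_conj, map_mul, map_inv₀,
    Complex.conj_ofReal]
  simp only [starRingEnd_apply, hk]

lemma star_cauchyTransform (u : ℝ → ℂ) (z : ℂ) :
    cauchyTransform (fun x => star (u x)) (star z) = star (cauchyTransform u z) := by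
  simp only [cauchyTransform, ← starRingEnd_apply, ← integral_conj, map_mul, map_inv₀, map_sub,
    Complex.conj_ofReal]

lemma IsLebesguePoint.star_comp (ht : IsLebesguePoint u t) :
    IsLebesguePoint (fun x => star (u x)) t := by
  simpa only [IsLebesguePoint, ← star_sub, norm_star] using ht

lemma integrable_star (hu : Integrable u μI) : Integrable (fun x => star (u x)) μI :=
  hu.congr' hu.1.star (ae_of_all _ fun _ => (norm_star _).symm)

theorem IsLebesguePoint.tendsto_truncatedHilbert_sub_cauchyTransform_of_im_pos
    (hu : Integrable u μI) (htI : t ∈ Ioo (-1 : ℝ) 1) (ht : IsLebesguePoint u t)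
    (hε : Tendsto ε l (𝓝[>] 0))
    (hz : ∀ᶠ r in l, (z r).im = ε r ∧ |(z r).re - t| ≤ ε r) :
    Tendsto (fun r => truncatedHilbert u t (ε r) - cauchyTransform u (z r)) l
      (𝓝 (-(Complex.I * u t))) := by
  have star_I : star Complex.I = -Complex.I := Complex.conj_I
  have hlim := (continuous_star.tendsto _).comp
    (ht.star_comp.tendsto_truncatedHilbert_sub_cauchyTransform (integrable_star hu) htI hε
      (z := fun r => star (z r)) (hz.mono fun r hr => by simpa using hr))
  simpa only [Function.comp_def, star_sub, ← star_truncatedHilbert, ← star_cauchyTransform,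
    star_star, star_mul', star_I, neg_mul] using hlim

end Plemelj

section Joukowski

open Metric

variable {ζ : ℂ} {θ : ℝ}

/-- The Joukowski map, which carries the punctured unit disc onto the complement of `[-1, 1]`. -/
def joukowski (ζ : ℂ) : ℂ := (ζ + ζ⁻¹) / 2

/-- The derivative of the Joukowski map in the radial direction, `ζ * deriv joukowski ζ`; a branch
of `√(z² - 1)` at `z = joukowski ζ`. -/
def radialDerivJoukowski (ζ : ℂ) : ℂ := (ζ - ζ⁻¹) / 2

lemma circleMap_neg_angle (θ : ℝ) : circleMap 0 1 (-θ) = (circleMap 0 1 θ)⁻¹ := by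
  simp [circleMap_zero_inv]

lemma circleMap_eq_cos_add_sin (θ : ℝ) :
    circleMap 0 1 θ = Real.cos θ + Real.sin θ * Complex.I := by
  simp [circleMap, Complex.exp_mul_I]

lemma joukowski_ofReal_mul_circleMap (r θ : ℝ) :
    joukowski (r * circleMap 0 1 θ) = ((r + r⁻¹) / 2 * Real.cos θ : ℝ) +
      ((r - r⁻¹) / 2 * Real.sin θ : ℝ) * Complex.I := by
  rw [joukowski, mul_inv, ← circleMap_neg_angle, circleMap_eq_cos_add_sin,
    circleMap_eq_cos_add_sin, Real.cos_neg, Real.sin_neg]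
  push_cast
  ring

lemma tendsto_radialDerivJoukowski (θ : ℝ) :
    Tendsto (fun r : ℝ => radialDerivJoukowski (r * circleMap 0 1 θ)) (𝓝[<] 1)
      (𝓝 (Complex.I * Real.sin θ)) := by
  have hlim := tendsto_ofReal_mul_nhdsLT_one (circleMap 0 1 θ)
  have hval : Complex.I * Real.sin θ = (circleMap 0 1 θ - (circleMap 0 1 θ)⁻¹) / 2 := by
    rw [← circleMap_neg_angle, circleMap_eq_cos_add_sin, circleMap_eq_cos_add_sin, Real.cos_neg,
      Real.sin_neg]
    push_cast
    ring
  rw [hval]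
  exact (hlim.sub (hlim.inv₀ (circleMap_ne_center one_ne_zero))).div_const 2

lemma one_sub_mul_one_sub_eq (hζ : ζ ≠ 0) (θ : ℝ) :
    (1 - circleMap 0 1 (-θ) * ζ) * (1 - circleMap 0 1 θ * ζ) =
      -(2 * ζ * (Real.cos θ - joukowski ζ)) := by
  rw [circleMap_eq_cos_add_sin, circleMap_eq_cos_add_sin, Real.cos_neg, Real.sin_neg, joukowski]
  have hsq : ((Real.cos θ : ℂ)) ^ 2 + (Real.sin θ : ℂ) ^ 2 = 1 := by
    exact_mod_cast Real.cos_sq_add_sin_sq θ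
  rw [Complex.ofReal_neg]
  field_simp
  linear_combination ζ ^ 2 * hsq - ζ ^ 2 * (Real.sin θ : ℂ) ^ 2 * Complex.I_sq

lemma cos_sub_joukowski_ne_zero (hζ : ζ ∈ ball (0 : ℂ) 1) (hζ0 : ζ ≠ 0) (θ : ℝ) :
    (Real.cos θ : ℂ) - joukowski ζ ≠ 0 := fun h => by
  have hprod := one_sub_mul_one_sub_eq hζ0 θ
  rw [h, mul_zero, neg_zero] at hprod
  exact mul_ne_zero (one_sub_mul_ne_zero (by simp) hζ) (one_sub_mul_ne_zero (by simp) hζ) hprod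

lemma inv_cos_sub_joukowski (hζ : ζ ≠ 0) (θ : ℝ) :
    (Real.cos θ - joukowski ζ)⁻¹ =
      -(2 * ζ) * ((1 - circleMap 0 1 (-θ) * ζ)⁻¹ * (1 - circleMap 0 1 θ * ζ)⁻¹) := by
  rw [← mul_inv, one_sub_mul_one_sub_eq hζ, inv_neg, neg_mul_neg,
    mul_inv, mul_inv_cancel_left₀ (mul_ne_zero two_ne_zero hζ)]

lemma inv_one_sub_add_inv_one_sub_sub_one (hζ : ζ ∈ ball (0 : ℂ) 1) (hζ0 : ζ ≠ 0) (θ : ℝ) :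
    (1 - circleMap 0 1 (-θ) * ζ)⁻¹ + (1 - circleMap 0 1 θ * ζ)⁻¹ - 1 =
      radialDerivJoukowski ζ * (Real.cos θ - joukowski ζ)⁻¹ := by
  have h₁ : 1 - circleMap 0 1 (-θ) * ζ ≠ 0 := one_sub_mul_ne_zero (by simp) hζ
  have h₂ : 1 - circleMap 0 1 θ * ζ ≠ 0 := one_sub_mul_ne_zero (by simp) hζ
  have hone : circleMap 0 1 (-θ) * circleMap 0 1 θ = 1 := by
    rw [circleMap_neg_angle, inv_mul_cancel₀ (circleMap_ne_center one_ne_zero)]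
  have hrad : 2 * ζ * radialDerivJoukowski ζ = ζ ^ 2 - 1 := by
    rw [radialDerivJoukowski]
    field_simp
  rw [inv_cos_sub_joukowski hζ0, inv_add_inv h₁ h₂, div_sub_one (mul_ne_zero h₁ h₂),
    div_eq_mul_inv, mul_inv]
  linear_combination ((1 - circleMap 0 1 (-θ) * ζ)⁻¹ * (1 - circleMap 0 1 θ * ζ)⁻¹) *
    (hrad - ζ ^ 2 * hone)

lemma inv_one_sub_sub_inv_one_sub (hζ : ζ ∈ ball (0 : ℂ) 1) (hζ0 : ζ ≠ 0) (θ : ℝ) :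
    (1 - circleMap 0 1 (-θ) * ζ)⁻¹ - (1 - circleMap 0 1 θ * ζ)⁻¹ =
      Complex.I * Real.sin θ * (Real.cos θ - joukowski ζ)⁻¹ := by
  have h₁ : 1 - circleMap 0 1 (-θ) * ζ ≠ 0 := one_sub_mul_ne_zero (by simp) hζ
  have h₂ : 1 - circleMap 0 1 θ * ζ ≠ 0 := one_sub_mul_ne_zero (by simp) hζ
  have hdiff : circleMap 0 1 θ - circleMap 0 1 (-θ) = 2 * Complex.I * Real.sin θ := by
    rw [circleMap_eq_cos_add_sin, circleMap_eq_cos_add_sin, Real.cos_neg, Real.sin_neg,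
      Complex.ofReal_neg]
    ring
  rw [inv_cos_sub_joukowski hζ0, inv_sub_inv h₁ h₂, div_eq_mul_inv, mul_inv]
  linear_combination
    (-ζ) * ((1 - circleMap 0 1 (-θ) * ζ)⁻¹ * (1 - circleMap 0 1 θ * ζ)⁻¹) * hdiff

end Joukowski

section ApproachRegion

variable {θ : ℝ}

/-- The distance from `joukowski (r * circleMap 0 1 θ)` to the real line, for `0 < r < 1`. -/
def radialHeight (θ r : ℝ) : ℝ := (r⁻¹ - r) / 2 * |Real.sin θ|

lemma tendsto_radialHeight (hθ : Real.sin θ ≠ 0) :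
    Tendsto (radialHeight θ) (𝓝[<] 1) (𝓝[>] 0) := by
  refine tendsto_nhdsWithin_iff.2 ⟨?_, ?_⟩
  · have hcont : ContinuousAt (radialHeight θ) 1 := by
      unfold radialHeight
      fun_prop (disch := norm_num)
    simpa [radialHeight] using hcont.tendsto.mono_left nhdsWithin_le_nhds
  · filter_upwards [Ioo_mem_nhdsLT one_pos] with r hr
    have := (one_lt_inv₀ hr.1).2 hr.2
    exact mul_pos (by linarith [hr.2]) (abs_pos.2 hθ)

lemma exists_tendsto_radialHeight_eq (hθ : Real.sin θ ≠ 0) :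
    ∃ ρ : ℝ → ℝ, Tendsto ρ (𝓝[>] 0) (𝓝[<] 1) ∧ ∀ ε, radialHeight θ (ρ ε) = ε := by
  set ρ : ℝ → ℝ := fun ε => √(1 + (ε / |Real.sin θ|) ^ 2) - ε / |Real.sin θ|
  refine ⟨ρ, tendsto_nhdsWithin_iff.2 ⟨?_, ?_⟩, fun ε => ?_⟩
  · have hcont : Continuous ρ := by fun_prop
    simpa [ρ] using (hcont.tendsto 0).mono_left nhdsWithin_le_nhds
  · filter_upwards [self_mem_nhdsWithin] with ε hε
    have hpos : 0 < ε / |Real.sin θ| := div_pos hε (abs_pos.2 hθ)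
    rw [mem_Iio, sub_lt_iff_lt_add, Real.sqrt_lt' (by positivity)]
    nlinarith
  · have hinv : (ρ ε)⁻¹ = √(1 + (ε / |Real.sin θ|) ^ 2) + ε / |Real.sin θ| := by
      refine inv_eq_of_mul_eq_one_right ?_
      have := Real.sq_sqrt (by positivity : 0 ≤ 1 + (ε / |Real.sin θ|) ^ 2)
      simp only [ρ]
      linear_combination this
    rw [radialHeight, hinv]
    have := abs_ne_zero.2 hθ
    simp only [ρ]
    field_simp
    ring

lemma eventually_abs_re_joukowski_sub_cos_le (hθ : Real.sin θ ≠ 0) :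
    ∀ᶠ r : ℝ in 𝓝[<] 1,
      |(joukowski (r * circleMap 0 1 θ)).re - Real.cos θ| ≤ radialHeight θ r := by
  filter_upwards [Ioo_mem_nhdsLT one_pos,
    Ioo_mem_nhdsLT (sub_lt_self 1 (abs_pos.2 hθ))] with r hr hrθ
  have hr0 := hr.1
  have hre : (joukowski (r * circleMap 0 1 θ)).re - Real.cos θ =
      (1 - r) / (2 * r) * ((1 - r) * Real.cos θ) := by
    rw [joukowski_ofReal_mul_circleMap]
    simp only [Complex.add_re, Complex.ofReal_re, Complex.re_ofReal_mul, Complex.I_re, mul_zero]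
    field_simp
    ring
  have hheight : radialHeight θ r = (1 - r) / (2 * r) * ((1 + r) * |Real.sin θ|) := by
    rw [radialHeight]
    field_simp
    ring
  have hpos : 0 ≤ (1 - r) / (2 * r) := div_nonneg (sub_nonneg.2 hr.2.le) (by positivity)
  rw [hre, hheight, abs_mul, abs_of_nonneg hpos, abs_mul, abs_of_pos (sub_pos.2 hr.2)]
  gcongr ?_ * ?_
  nlinarith [Real.abs_cos_le_one θ, abs_pos.2 hθ, hrθ.1, hr.2]

lemma eventually_joukowski_approach_of_sin_pos (hθ : 0 < Real.sin θ) :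
    ∀ᶠ r : ℝ in 𝓝[<] 1, (joukowski (r * circleMap 0 1 θ)).im = -radialHeight θ r ∧
      |(joukowski (r * circleMap 0 1 θ)).re - Real.cos θ| ≤ radialHeight θ r := by
  filter_upwards [eventually_abs_re_joukowski_sub_cos_le hθ.ne'] with r hr
  refine ⟨?_, hr⟩
  rw [joukowski_ofReal_mul_circleMap, radialHeight, abs_of_pos hθ]
  simp only [Complex.add_im, Complex.ofReal_im, Complex.im_ofReal_mul, Complex.I_im]
  ring

lemma eventually_joukowski_approach_of_sin_neg (hθ : Real.sin θ < 0) :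
    ∀ᶠ r : ℝ in 𝓝[<] 1, (joukowski (r * circleMap 0 1 θ)).im = radialHeight θ r ∧
      |(joukowski (r * circleMap 0 1 θ)).re - Real.cos θ| ≤ radialHeight θ r := by
  filter_upwards [eventually_abs_re_joukowski_sub_cos_le hθ.ne] with r hr
  refine ⟨?_, hr⟩
  rw [joukowski_ofReal_mul_circleMap, radialHeight, abs_of_neg hθ]
  simp only [Complex.add_im, Complex.ofReal_im, Complex.im_ofReal_mul, Complex.I_im]
  ring

end ApproachRegion

section CosineSubstitution

lemma μT_eq_add_restrict :
    μT = volume.restrict (Ioo (-Real.pi) 0) + volume.restrict (Ioo 0 Real.pi) := by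
  have hdisj : Disjoint (Ioc (-Real.pi) 0) (Ioc 0 Real.pi) :=
    disjoint_left.2 fun x hx hx' => hx'.1.not_ge hx.2
  rw [μT, ← Ioc_union_Ioc_eq_Ioc (neg_nonpos.2 Real.pi_pos.le) Real.pi_pos.le,
    Measure.restrict_union hdisj measurableSet_Ioc, restrict_Ioo_eq_restrict_Ioc,
    restrict_Ioo_eq_restrict_Ioc]

lemma image_cos_Ioo : Real.cos '' Ioo 0 Real.pi = Ioo (-1) 1 :=
  Real.cosPartialHomeomorph.image_source_eq_target

lemma image_cos_Ioo_neg : Real.cos '' Ioo (-Real.pi) 0 = Ioo (-1) 1 := by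
  rw [← image_cos_Ioo, ← neg_zero, ← image_neg_Ioo, image_image]
  simp only [Real.cos_neg, neg_zero]

lemma injOn_cos_Ioo_neg : InjOn Real.cos (Ioo (-Real.pi) 0) := fun x hx y hy hxy => by
  rw [← Real.cos_neg x, ← Real.cos_neg y] at hxy
  exact neg_injective (Real.injOn_cos ⟨by linarith [hx.2], by linarith [hx.1]⟩
    ⟨by linarith [hy.2], by linarith [hy.1]⟩ hxy)

lemma map_cos_withDensity_abs_sin {s : Set ℝ} (hs : MeasurableSet s) (hinj : InjOn Real.cos s) :
    Measure.map Real.cos ((volume.restrict s).withDensity fun θ => ENNReal.ofReal |Real.sin θ|) =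
      volume.restrict (Real.cos '' s) := by
  have h := map_withDensity_abs_det_fderiv_eq_addHaar volume hs.nullMeasurableSet
    (fun θ _ => (Real.hasDerivAt_cos θ).hasFDerivAt.hasFDerivWithinAt) hinj
  simpa only [ContinuousLinearMap.det_toSpanSingleton, abs_neg] using h

lemma measurePreserving_cos :
    MeasurePreserving Real.cos (μT.withDensity fun θ => ENNReal.ofReal |Real.sin θ|)
      ((2 : ENNReal) • μI) := by
  refine ⟨Real.measurable_cos, ?_⟩
  rw [μT_eq_add_restrict, withDensity_add_measure,
    Measure.map_add _ _ Real.measurable_cos,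
    map_cos_withDensity_abs_sin measurableSet_Ioo injOn_cos_Ioo_neg,
    map_cos_withDensity_abs_sin measurableSet_Ioo (Real.injOn_cos.mono Ioo_subset_Icc_self),
    image_cos_Ioo, image_cos_Ioo_neg, two_smul, μI]

lemma measurable_ofReal_abs_sin : Measurable fun θ => ENNReal.ofReal |Real.sin θ| := by fun_prop

lemma ae_sin_ne_zero : ∀ᵐ θ ∂μT, Real.sin θ ≠ 0 := by
  refine ae_restrict_of_ae (measure_mono_null (t := range fun n : ℤ => n * Real.pi) ?_
    ((countable_range _).measure_zero _))
  intro θ hθ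
  exact Real.sin_eq_zero_iff.1 (by simpa using hθ)

lemma quasiMeasurePreserving_cos : Measure.QuasiMeasurePreserving Real.cos μT μI := by
  have hac : μT ≪ μT.withDensity fun θ => ENNReal.ofReal |Real.sin θ| := by
    refine withDensity_absolutelyContinuous' measurable_ofReal_abs_sin.aemeasurable ?_
    filter_upwards [ae_sin_ne_zero] with θ hθ
    simpa using hθ
  exact (measurePreserving_cos.quasiMeasurePreserving.mono_left hac).mono_right
    Measure.smul_absolutelyContinuous

lemma quasiMeasurePreserving_arccos : Measure.QuasiMeasurePreserving Real.arccos μI μT := by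
  refine ⟨Real.measurable_arccos, Measure.AbsolutelyContinuous.mk fun s hs hs0 => ?_⟩
  rw [Measure.map_apply Real.measurable_arccos hs, μI, Measure.restrict_apply
    (Real.measurable_arccos hs)]
  rw [μT, Measure.restrict_apply hs] at hs0
  refine measure_mono_null (fun t ht => ?_)
    (addHaar_image_eq_zero_of_differentiableOn_of_addHaar_eq_zero volume
      Real.differentiable_cos.differentiableOn hs0)
  refine ⟨Real.arccos t, ⟨ht.1, ?_, Real.arccos_le_pi t⟩, Real.cos_arccos ht.2.1.le ht.2.2.le⟩
  linarith [Real.arccos_nonneg t, Real.pi_pos]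

variable {G : ℝ → ℂ}

lemma integral_abs_sin_mul_comp_cos (hG : AEStronglyMeasurable G μI) :
    ∫ θ, (|Real.sin θ| : ℝ) * G (Real.cos θ) ∂μT = 2 * ∫ t, G t ∂μI := by
  have h := integral_map measurePreserving_cos.aemeasurable (f := G)
    (by rw [measurePreserving_cos.map_eq]; exact hG.smul_measure _)
  rw [measurePreserving_cos.map_eq, integral_smul_measure,
    integral_withDensity_eq_integral_toReal_smul measurable_ofReal_abs_sin
      (ae_of_all _ fun _ => ENNReal.ofReal_lt_top)] at h
  simpa using h.symm

lemma integrable_abs_sin_mul_comp_cos (hG : Integrable G μI) :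
    Integrable (fun θ => (|Real.sin θ| : ℝ) * G (Real.cos θ)) μT := by
  have h := measurePreserving_cos.integrable_comp_of_integrable
    (hG.smul_measure (ENNReal.ofNat_ne_top (n := 2)))
  rw [integrable_withDensity_iff_integrable_smul' measurable_ofReal_abs_sin
    (ae_of_all _ fun _ => ENNReal.ofReal_lt_top)] at h
  simpa using h

lemma integrable_sin_mul_comp_cos (hG : Integrable G μI) :
    Integrable (fun θ => Real.sin θ * G (Real.cos θ)) μT := by
  refine (integrable_abs_sin_mul_comp_cos hG).congr' ?_ (ae_of_all _ fun θ => by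
    simp only [norm_mul, Complex.norm_real, Real.norm_eq_abs, abs_abs])
  exact (by fun_prop : Continuous fun θ => (Real.sin θ : ℂ)).aestronglyMeasurable.mul
    (hG.1.comp_quasiMeasurePreserving quasiMeasurePreserving_cos)

lemma integral_sin_mul_comp_cos (G : ℝ → ℂ) :
    ∫ θ, Real.sin θ * G (Real.cos θ) ∂μT = 0 := by
  rw [μT, ← intervalIntegral.integral_of_le (by linarith [Real.pi_pos])]
  have h := intervalIntegral.integral_comp_neg (a := -Real.pi) (b := Real.pi)
    fun θ => (Real.sin θ : ℂ) * G (Real.cos θ)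
  simp only [Real.sin_neg, Real.cos_neg, Complex.ofReal_neg, neg_mul, neg_neg,
    intervalIntegral.integral_neg] at h
  exact self_eq_neg.1 h.symm

end CosineSubstitution

section CauchyKernel

open Metric

variable {α : Type*} [MeasurableSpace α] {μ : Measure α} {u b : α → ℂ} {a ζ : ℂ}

lemma norm_inv_one_sub_mul_le (ha : ‖a‖ ≤ 1) {ρ : ℝ} (hρ : ρ < 1) (hζ : ‖ζ‖ ≤ ρ) :
    ‖(1 - a * ζ)⁻¹‖ ≤ (1 - ρ)⁻¹ := by
  rw [norm_inv]
  refine inv_anti₀ (sub_pos.2 hρ) ?_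
  have hle : ‖a * ζ‖ ≤ ρ := by
    rw [norm_mul]
    exact (mul_le_of_le_one_left (norm_nonneg ζ) ha).trans hζ
  have := norm_sub_norm_le 1 (a * ζ)
  rw [norm_one] at this
  linarith

lemma integrable_mul_inv_one_sub_mul (hu : Integrable u μ) (hb : AEStronglyMeasurable b μ)
    (hb1 : ∀ x, ‖b x‖ ≤ 1) (hζ : ζ ∈ ball (0 : ℂ) 1) :
    Integrable (fun x => u x * (1 - b x * ζ)⁻¹) μ :=
  hu.mul_bdd (aestronglyMeasurable_const.sub (hb.mul_const ζ)).inv₀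
    (ae_of_all _ fun x => norm_inv_one_sub_mul_le (hb1 x) (mem_ball_zero_iff.1 hζ) le_rfl)

lemma differentiableOn_integral_mul_inv_one_sub_mul (hu : Integrable u μ)
    (hb : AEStronglyMeasurable b μ) (hb1 : ∀ x, ‖b x‖ ≤ 1) :
    DifferentiableOn ℂ (fun ζ => ∫ x, u x * (1 - b x * ζ)⁻¹ ∂μ) (ball 0 1) := fun ζ hζ => by
  obtain ⟨ρ, hζρ, hρ⟩ := exists_between (mem_ball_zero_iff.1 hζ)
  have hsub : ball (0 : ℂ) ρ ⊆ ball 0 1 := ball_subset_ball hρ.le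
  have hderiv (x : α) {z : ℂ} (hz : z ∈ ball (0 : ℂ) ρ) :
      HasDerivAt (fun z => u x * (1 - b x * z)⁻¹) (u x * (b x * (1 - b x * z)⁻¹ ^ 2)) z := by
    refine (((((hasDerivAt_id z).const_mul (b x)).const_sub 1).inv
      (one_sub_mul_ne_zero (hb1 x) (hsub hz))).const_mul (u x)).congr_deriv ?_
    rw [mul_one, neg_neg, inv_pow, div_eq_mul_inv]
    rfl
  refine (hasDerivAt_integral_of_dominated_loc_of_deriv_le
    (isOpen_ball.mem_nhds (mem_ball_zero_iff.2 hζρ))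
    (eventually_of_mem (isOpen_ball.mem_nhds hζ) fun z hz =>
      (integrable_mul_inv_one_sub_mul hu hb hb1 hz).1)
    (integrable_mul_inv_one_sub_mul hu hb hb1 hζ)
    (hu.1.mul (hb.mul ((aestronglyMeasurable_const.sub (hb.mul_const ζ)).inv₀.pow 2)))
    (ae_of_all _ fun x z hz => ?_) (hu.norm.mul_const ((1 - ρ)⁻¹ ^ 2))
    (ae_of_all _ fun x z hz => hderiv x hz)).2.differentiableAt.differentiableWithinAt
  have hz := norm_inv_one_sub_mul_le (hb1 x) hρ (mem_ball_zero_iff.1 hz).le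
  rw [norm_mul, norm_mul, norm_pow]
  gcongr
  exact (mul_le_of_le_one_left (by positivity) (hb1 x)).trans (by gcongr)

lemma half_le_re_inv_one_sub {w : ℂ} (hw : ‖w‖ < 1) : 1 / 2 ≤ ((1 - w)⁻¹).re := by
  have hsq : Complex.normSq w < 1 := by
    rw [Complex.normSq_eq_norm_sq]
    exact pow_lt_one₀ (norm_nonneg w) hw two_ne_zero
  have hne : 1 - w ≠ 0 := sub_ne_zero.2 fun h => by simp [← h] at hw
  rw [Complex.inv_re, div_le_div_iff₀ two_pos (Complex.normSq_pos.2 hne)]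
  rw [Complex.normSq_apply] at hsq ⊢
  simp only [Complex.sub_re, Complex.one_re, Complex.sub_im, Complex.one_im]
  nlinarith

end CauchyKernel

section HerglotzTransform

open Metric

variable {u v : ℝ → ℂ} {ζ : ℂ} {θ : ℝ}

/-- The Herglotz kernel of the unit circle, symmetrised under complex conjugation of the boundary
point. -/
def herglotzKernel (ζ : ℂ) (θ : ℝ) : ℂ :=
  (1 - circleMap 0 1 (-θ) * ζ)⁻¹ + (1 - circleMap 0 1 θ * ζ)⁻¹ - 1

/-- The Herglotz transform of the even function `|sin θ| * u (cos θ)` on the unit circle, as an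
integral over `x = cos θ`. -/
def herglotzTransform (u : ℝ → ℂ) (ζ : ℂ) : ℂ :=
  (Real.pi : ℂ)⁻¹ * ∫ x, u x * herglotzKernel ζ (Real.arccos x) ∂μI

lemma re_herglotzKernel_nonneg (hζ : ζ ∈ ball (0 : ℂ) 1) (θ : ℝ) :
    0 ≤ (herglotzKernel ζ θ).re := by
  have hζ : ‖ζ‖ < 1 := mem_ball_zero_iff.1 hζ
  have hre (θ : ℝ) := half_le_re_inv_one_sub (w := circleMap 0 1 θ * ζ) (by simpa using hζ)
  rw [herglotzKernel, Complex.sub_re, Complex.add_re, Complex.one_re]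
  linarith [hre θ, hre (-θ)]

lemma measurable_circleMap_comp {s : ℝ → ℝ} (hs : Measurable s) :
    Measurable fun x => circleMap 0 1 (s x) :=
  (continuous_circleMap 0 1).measurable.comp hs

lemma integrable_mul_inv_one_sub_circleMap_mul (hu : Integrable u μI) (hζ : ζ ∈ ball (0 : ℂ) 1)
    {s : ℝ → ℝ} (hs : Measurable s) :
    Integrable (fun x => u x * (1 - circleMap 0 1 (s x) * ζ)⁻¹) μI :=
  integrable_mul_inv_one_sub_mul hu (measurable_circleMap_comp hs).aestronglyMeasurable
    (fun x => by simp) hζ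

lemma differentiableOn_integral_mul_inv_one_sub_circleMap_mul (hu : Integrable u μI) {s : ℝ → ℝ}
    (hs : Measurable s) :
    DifferentiableOn ℂ (fun ζ => ∫ x, u x * (1 - circleMap 0 1 (s x) * ζ)⁻¹ ∂μI) (ball 0 1) :=
  differentiableOn_integral_mul_inv_one_sub_mul hu
    (measurable_circleMap_comp hs).aestronglyMeasurable fun x => by simp

lemma integrable_mul_herglotzKernel (hu : Integrable u μI) (hζ : ζ ∈ ball (0 : ℂ) 1) :
    Integrable (fun x => u x * herglotzKernel ζ (Real.arccos x)) μI := by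
  simp only [herglotzKernel, mul_sub, mul_add, mul_one]
  exact ((integrable_mul_inv_one_sub_circleMap_mul hu hζ Real.measurable_arccos.neg).add
    (integrable_mul_inv_one_sub_circleMap_mul hu hζ Real.measurable_arccos)).sub hu

lemma differentiableOn_herglotzTransform (hu : Integrable u μI) :
    DifferentiableOn ℂ (herglotzTransform u) (ball 0 1) := by
  refine ((((differentiableOn_integral_mul_inv_one_sub_circleMap_mul hu
    Real.measurable_arccos.neg).add (differentiableOn_integral_mul_inv_one_sub_circleMap_mul hu
    Real.measurable_arccos)).sub_const (∫ x, u x ∂μI)).const_mul (Real.pi : ℂ)⁻¹).congr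
      fun ζ hζ => ?_
  have h₁ := integrable_mul_inv_one_sub_circleMap_mul hu hζ Real.measurable_arccos.neg
  have h₂ := integrable_mul_inv_one_sub_circleMap_mul hu hζ Real.measurable_arccos
  simp only [herglotzTransform, herglotzKernel, mul_sub, mul_add, mul_one, Pi.add_apply]
  rw [← mul_add, ← mul_sub]
  exact congrArg _ ((integral_sub (h₁.add h₂) hu).trans
    (congrArg (· - ∫ x, u x ∂μI) (integral_add h₁ h₂)))

lemma herglotzTransform_eq (hζ : ζ ∈ ball (0 : ℂ) 1) (hζ0 : ζ ≠ 0) (u : ℝ → ℂ) :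
    herglotzTransform u ζ = radialDerivJoukowski ζ * cauchyTransform u (joukowski ζ) := by
  have hint : ∫ x, u x * herglotzKernel ζ (Real.arccos x) ∂μI =
      ∫ x, radialDerivJoukowski ζ * (u x * ((x : ℂ) - joukowski ζ)⁻¹) ∂μI := by
    refine integral_congr_ae ?_
    filter_upwards [ae_restrict_mem measurableSet_Ioo] with x hx
    rw [herglotzKernel, inv_one_sub_add_inv_one_sub_sub_one hζ hζ0,
      Real.cos_arccos hx.1.le hx.2.le, mul_left_comm]
  rw [herglotzTransform, cauchyTransform, hint, integral_const_mul, mul_left_comm]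

lemma isSmirnov_herglotzTransform_of_nonneg {w : ℝ → ℝ} (hw : Integrable w μI) (hw0 : 0 ≤ w) :
    IsSmirnov (herglotzTransform fun x => (w x : ℂ)) := by
  refine .of_re_nonneg (differentiableOn_herglotzTransform hw.ofReal) fun ζ hζ => ?_
  rw [herglotzTransform, ← Complex.ofReal_inv, Complex.re_ofReal_mul]
  refine mul_nonneg (inv_nonneg.2 Real.pi_pos.le) ?_
  have hre := integral_re (𝕜 := ℂ) (integrable_mul_herglotzKernel hw.ofReal hζ)
  refine le_of_le_of_eq (integral_nonneg fun x => ?_) hre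
  rw [RCLike.re_eq_complex_re]
  exact (Complex.re_ofReal_mul _ _).ge.trans' (mul_nonneg (hw0 x) (re_herglotzKernel_nonneg hζ _))

lemma isSmirnov_herglotzTransform_add_const_mul (hu : Integrable u μI) (hv : Integrable v μI)
    (hHu : IsSmirnov (herglotzTransform u)) (hHv : IsSmirnov (herglotzTransform v)) (c : ℂ) :
    IsSmirnov (herglotzTransform fun x => u x + c * v x) := by
  refine (hHu.add ((IsSmirnov.const c).mul hHv)).congr fun ζ hζ => ?_
  simp only [herglotzTransform, add_mul, mul_assoc]
  rw [integral_add (integrable_mul_herglotzKernel hu hζ)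
    ((integrable_mul_herglotzKernel hv hζ).const_mul c), integral_const_mul]
  ring

lemma isSmirnov_herglotzTransform_ofReal {w : ℝ → ℝ} (hw : Integrable w μI) :
    IsSmirnov (herglotzTransform fun x => (w x : ℂ)) := by
  have h := isSmirnov_herglotzTransform_add_const_mul hw.pos_part.ofReal hw.neg_part.ofReal
    (isSmirnov_herglotzTransform_of_nonneg hw.pos_part fun x => le_max_right _ _)
    (isSmirnov_herglotzTransform_of_nonneg hw.neg_part fun x => le_max_right _ _) (-1)
  have hw' : (fun x => (w x : ℂ)) = fun x => ((max (w x) 0 : ℝ) : ℂ) +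
      (-1) * (max (-w x) 0 : ℝ) := by
    ext x
    rcases le_total 0 (w x) with h | h <;> simp [h]
  rw [hw']
  exact h

theorem isSmirnov_herglotzTransform (hu : Integrable u μI) : IsSmirnov (herglotzTransform u) := by
  have h := isSmirnov_herglotzTransform_add_const_mul hu.re.ofReal hu.im.ofReal
    (isSmirnov_herglotzTransform_ofReal hu.re) (isSmirnov_herglotzTransform_ofReal hu.im) Complex.I
  have hu' : u = fun x => ((u x).re : ℂ) + Complex.I * (u x).im := by
    ext x
    rw [mul_comm, Complex.re_add_im]
  rw [hu']
  exact h

end HerglotzTransform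

section BoundaryValues

variable {u : ℝ → ℂ}

/-- The boundary function on the unit circle with even part `|sin θ| * f (cos θ)` and odd part
`I * sin θ * g (cos θ)`; for `g = FHT f` these are the radial limits of `herglotzTransform f`. -/
def herglotzBoundary (f g : ℝ → ℂ) (θ : ℝ) : ℂ :=
  (|Real.sin θ| : ℝ) * f (Real.cos θ) + Complex.I * (Real.sin θ * g (Real.cos θ))

lemma ofReal_mul_circleMap_ne_zero {r : ℝ} (hr : r ≠ 0) (θ : ℝ) :
    (r : ℂ) * circleMap 0 1 θ ≠ 0 :=
  mul_ne_zero (Complex.ofReal_ne_zero.2 hr) (circleMap_ne_center one_ne_zero)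

lemma eventually_herglotzTransform_eq (u : ℝ → ℂ) (θ : ℝ) :
    ∀ᶠ r : ℝ in 𝓝[<] 1, herglotzTransform u (r * circleMap 0 1 θ) =
      radialDerivJoukowski (r * circleMap 0 1 θ) *
        cauchyTransform u (joukowski (r * circleMap 0 1 θ)) := by
  filter_upwards [Ioo_mem_nhdsLT one_pos] with r hr
  exact herglotzTransform_eq (ofReal_mul_circleMap_mem_ball hr θ)
    (ofReal_mul_circleMap_ne_zero hr.1.ne' θ) u

lemma ae_exists_tendsto_cauchyTransform (hu : Integrable u μI) :
    ∀ᵐ θ ∂μT, ∃ c, Tendsto (fun r : ℝ => cauchyTransform u (joukowski (r * circleMap 0 1 θ)))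
      (𝓝[<] 1) (𝓝 c) := by
  obtain ⟨h, hh⟩ := (isSmirnov_herglotzTransform hu).exists_ae_tendsto_radial
  filter_upwards [hh, ae_sin_ne_zero] with θ hθ hsin
  have hne : Complex.I * Real.sin θ ≠ 0 := mul_ne_zero Complex.I_ne_zero (by exact_mod_cast hsin)
  have hD := tendsto_radialDerivJoukowski θ
  refine ⟨_, (hθ.div hD hne).congr' ?_⟩
  filter_upwards [hD.eventually_ne hne, eventually_herglotzTransform_eq u θ] with r hr hur
  rw [Pi.div_apply, hur, mul_div_cancel_left₀ _ hr]

theorem ae_tendsto_truncatedHilbert (hu : Integrable u μI) :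
    ∀ᵐ t ∂μI, Tendsto (truncatedHilbert u t) (𝓝[>] 0) (𝓝 (FHT u t)) := by
  filter_upwards [quasiMeasurePreserving_arccos.ae (ae_exists_tendsto_cauchyTransform hu),
    ae_isLebesguePoint hu, ae_restrict_mem measurableSet_Ioo] with t ⟨c, hc⟩ ht htI
  have hsin : 0 < Real.sin (Real.arccos t) :=
    Real.sin_pos_of_pos_of_lt_pi (Real.arccos_pos.2 htI.2) (Real.arccos_lt_pi.2 htI.1)
  have happroach := eventually_joukowski_approach_of_sin_pos hsin
  rw [Real.cos_arccos htI.1.le htI.2.le] at happroach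
  have hsum := (ht.tendsto_truncatedHilbert_sub_cauchyTransform hu htI
    (tendsto_radialHeight hsin.ne') happroach).add hc
  obtain ⟨ρ, hρ, hheight⟩ := exists_tendsto_radialHeight_eq hsin.ne'
  have hlim := hsum.comp hρ
  simp only [sub_add_cancel, Function.comp_def, hheight] at hlim
  rwa [FHT_eq_of_tendsto hlim]

theorem ae_tendsto_cauchyTransform (hu : Integrable u μI) :
    ∀ᵐ θ ∂μT, Tendsto (fun r : ℝ => cauchyTransform u (joukowski (r * circleMap 0 1 θ)))
      (𝓝[<] 1) (𝓝 (FHT u (Real.cos θ) -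
        Complex.I * (SignType.sign (Real.sin θ) : ℝ) * u (Real.cos θ))) := by
  filter_upwards [ae_sin_ne_zero, quasiMeasurePreserving_cos.ae (ae_tendsto_truncatedHilbert hu),
    quasiMeasurePreserving_cos.ae (ae_isLebesguePoint hu),
    quasiMeasurePreserving_cos.ae (ae_restrict_mem measurableSet_Ioo)] with θ hsin hT ht htI
  have hheight := tendsto_radialHeight hsin
  have hT := hT.comp hheight
  rcases hsin.lt_or_gt with hneg | hpos
  · have hdiff := ht.tendsto_truncatedHilbert_sub_cauchyTransform_of_im_pos hu htI hheight
      (eventually_joukowski_approach_of_sin_neg hneg)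
    simpa [sign_neg hneg] using hT.sub hdiff
  · have hdiff := ht.tendsto_truncatedHilbert_sub_cauchyTransform hu htI hheight
      (eventually_joukowski_approach_of_sin_pos hpos)
    simpa [sign_pos hpos] using hT.sub hdiff

theorem ae_tendsto_herglotzTransform (hu : Integrable u μI) :
    ∀ᵐ θ ∂μT, Tendsto (fun r : ℝ => herglotzTransform u (r * circleMap 0 1 θ)) (𝓝[<] 1)
      (𝓝 (herglotzBoundary u (FHT u) θ)) := by
  filter_upwards [ae_tendsto_cauchyTransform hu] with θ hθ
  have hsign : (Real.sin θ : ℂ) * (SignType.sign (Real.sin θ) : ℝ) = (|Real.sin θ| : ℝ) := by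
    exact_mod_cast self_mul_sign (Real.sin θ)
  have hlim := (tendsto_radialDerivJoukowski θ).mul hθ
  have hval : Complex.I * Real.sin θ * (FHT u (Real.cos θ) -
      Complex.I * (SignType.sign (Real.sin θ) : ℝ) * u (Real.cos θ)) =
        herglotzBoundary u (FHT u) θ := by
    rw [herglotzBoundary]
    linear_combination u (Real.cos θ) * hsign -
      Real.sin θ * (SignType.sign (Real.sin θ) : ℝ) * u (Real.cos θ) * Complex.I_sq
  rw [hval] at hlim
  exact hlim.congr' ((eventually_herglotzTransform_eq u θ).mono fun r hr => hr.symm)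

end BoundaryValues

section HerglotzBoundary

open Metric

variable {f g K : ℝ → ℂ} {H : ℂ → ℂ} {ζ : ℂ}

lemma sqrt_one_sub_cos_sq (θ : ℝ) : √(1 - Real.cos θ ^ 2) = |Real.sin θ| :=
  (Real.abs_sin_eq_sqrt_one_sub_cos_sq θ).symm

lemma sin_mul_sin_eq (θ : ℝ) :
    (Real.sin θ : ℂ) * Real.sin θ = (|Real.sin θ| : ℝ) * √(1 - Real.cos θ ^ 2) := by
  rw [sqrt_one_sub_cos_sq]
  exact_mod_cast (abs_mul_abs_self (Real.sin θ)).symm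

lemma integrable_mul_of_continuousOn_Icc (hf : Integrable f μI)
    (hK : ContinuousOn K (Icc (-1) 1)) : Integrable (fun x => f x * K x) μI :=
  IntegrableOn.mul_continuousOn_of_subset hf hK measurableSet_Ioo isCompact_Icc Ioo_subset_Icc_self

lemma integrable_sqrt_mul (hf : Integrable f μI) :
    Integrable (fun x => (√(1 - x ^ 2) : ℂ) * f x) μI := by
  simp only [mul_comm _ (f _)]
  exact integrable_mul_of_continuousOn_Icc hf (by fun_prop)

lemma continuousOn_inv_ofReal_sub_joukowski (hζ : ζ ∈ ball (0 : ℂ) 1) (hζ0 : ζ ≠ 0) :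
    ContinuousOn (fun x : ℝ => ((x : ℂ) - joukowski ζ)⁻¹) (Icc (-1) 1) := by
  refine ContinuousOn.inv₀ (by fun_prop) fun x hx => ?_
  rw [← Real.cos_arccos hx.1 hx.2]
  exact cos_sub_joukowski_ne_zero hζ hζ0 _

lemma integrable_herglotzBoundary (hf : Integrable f μI) (hg : Integrable g μI) :
    Integrable (herglotzBoundary f g) μT :=
  (integrable_abs_sin_mul_comp_cos hf).add ((integrable_sin_mul_comp_cos hg).const_mul Complex.I)

lemma integral_herglotzBoundary_mul_comp_cos (hf : Integrable (fun x => f x * K x) μI)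
    (hg : Integrable (fun x => g x * K x) μI) :
    ∫ θ, herglotzBoundary f g θ * K (Real.cos θ) ∂μT = 2 * ∫ x, f x * K x ∂μI := by
  simp only [herglotzBoundary, add_mul, mul_assoc]
  rw [integral_add (integrable_abs_sin_mul_comp_cos hf)
      ((integrable_sin_mul_comp_cos hg).const_mul Complex.I),
    integral_abs_sin_mul_comp_cos hf.1, integral_const_mul,
    integral_sin_mul_comp_cos fun x => g x * K x, mul_zero, add_zero]

lemma integral_herglotzBoundary_mul_sin_mul_comp_cos (hf : Integrable (fun x => f x * K x) μI)
    (hg : Integrable (fun x => g x * K x) μI) :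
    ∫ θ, herglotzBoundary f g θ * (Real.sin θ * K (Real.cos θ)) ∂μT =
      2 * Complex.I * ∫ x, √(1 - x ^ 2) * g x * K x ∂μI := by
  have hsplit (θ : ℝ) : herglotzBoundary f g θ * (Real.sin θ * K (Real.cos θ)) =
      Real.sin θ * (√(1 - Real.cos θ ^ 2) * (f (Real.cos θ) * K (Real.cos θ))) +
        Complex.I * ((|Real.sin θ| : ℝ) *
          (√(1 - Real.cos θ ^ 2) * (g (Real.cos θ) * K (Real.cos θ)))) := by
    rw [herglotzBoundary, ← sqrt_one_sub_cos_sq]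
    have := sin_mul_sin_eq θ
    rw [← sqrt_one_sub_cos_sq] at this
    linear_combination Complex.I * g (Real.cos θ) * K (Real.cos θ) * this
  simp only [hsplit]
  rw [integral_add (integrable_sin_mul_comp_cos (integrable_sqrt_mul hf))
      ((integrable_abs_sin_mul_comp_cos (integrable_sqrt_mul hg)).const_mul Complex.I),
    integral_sin_mul_comp_cos fun x => √(1 - x ^ 2) * (f x * K x), integral_const_mul,
    integral_abs_sin_mul_comp_cos (integrable_sqrt_mul hg).1]
  simp only [mul_assoc, zero_add, mul_left_comm]

section Representation

variable (hf : Integrable f μI) (hg : Integrable g μI) (hH : IsSmirnov H)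
  (hlim : ∀ᵐ θ ∂μT, Tendsto (fun r : ℝ => H (r * circleMap 0 1 θ)) (𝓝[<] 1)
    (𝓝 (herglotzBoundary f g θ)))
  (hζ : ζ ∈ ball (0 : ℂ) 1) (hζ0 : ζ ≠ 0)

include hf hg hH hlim hζ hζ0

theorem IsSmirnov.eq_herglotzTransform : H ζ = herglotzTransform f ζ := by
  have hh := integrable_herglotzBoundary hf hg
  have hk := isReproducingKernel_inv_one_sub_circleMap_neg_mul hζ
  have hk₀ := isReproducingKernel_inv_one_sub_circleMap_mul hζ
  have hK := continuousOn_inv_ofReal_sub_joukowski hζ hζ0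
  have hmean : ∫ θ, herglotzBoundary f g θ ∂μT = 2 * Real.pi * H 0 := by
    simpa using hH.integral_radialLimit_mul
      (isReproducingKernel_inv_one_sub_circleMap_mul (mem_ball_self one_pos)) hh hlim
  have hherglotz : ∫ θ, herglotzBoundary f g θ * ((1 - circleMap 0 1 (-θ) * ζ)⁻¹ +
      (1 - circleMap 0 1 θ * ζ)⁻¹ - 1) ∂μT = 2 * Real.pi * H ζ := by
    simp only [add_sub_assoc, mul_add, mul_sub, mul_one]
    have hsub : Integrable (fun θ => herglotzBoundary f g θ * (1 - circleMap 0 1 θ * ζ)⁻¹ -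
        herglotzBoundary f g θ) μT := (hk₀.integrable_mul hh).sub hh
    rw [integral_add (hk.integrable_mul hh) hsub,
      integral_sub (hk₀.integrable_mul hh) hh, hmean, hH.integral_radialLimit_mul hk hh hlim,
      hH.integral_radialLimit_mul hk₀ hh hlim, sub_self, add_zero]
  simp only [inv_one_sub_add_inv_one_sub_sub_one hζ hζ0, mul_left_comm _ (radialDerivJoukowski ζ)]
    at hherglotz
  rw [integral_const_mul, integral_herglotzBoundary_mul_comp_cos
    (integrable_mul_of_continuousOn_Icc hf hK) (integrable_mul_of_continuousOn_Icc hg hK)]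
    at hherglotz
  have hπ : (Real.pi : ℂ) ≠ 0 := by exact_mod_cast Real.pi_ne_zero
  rw [herglotzTransform_eq hζ hζ0, cauchyTransform]
  linear_combination -(Real.pi : ℂ)⁻¹ / 2 * hherglotz - H ζ * mul_inv_cancel₀ hπ

theorem IsSmirnov.sub_apply_zero_eq_neg_cauchyTransform :
    H ζ - H 0 = -cauchyTransform (fun x => √(1 - x ^ 2) * g x) (joukowski ζ) := by
  have hh := integrable_herglotzBoundary hf hg
  have hk := isReproducingKernel_inv_one_sub_circleMap_neg_mul hζ
  have hk₀ := isReproducingKernel_inv_one_sub_circleMap_mul hζ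
  have hK := continuousOn_inv_ofReal_sub_joukowski hζ hζ0
  have hdiff : ∫ θ, herglotzBoundary f g θ * ((1 - circleMap 0 1 (-θ) * ζ)⁻¹ -
      (1 - circleMap 0 1 θ * ζ)⁻¹) ∂μT = 2 * Real.pi * H ζ - 2 * Real.pi * H 0 := by
    simp only [mul_sub]
    rw [integral_sub (hk.integrable_mul hh) (hk₀.integrable_mul hh),
      hH.integral_radialLimit_mul hk hh hlim, hH.integral_radialLimit_mul hk₀ hh hlim]
  simp only [inv_one_sub_sub_inv_one_sub hζ hζ0, mul_assoc, mul_left_comm _ Complex.I] at hdiff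
  rw [integral_const_mul, integral_herglotzBoundary_mul_sin_mul_comp_cos
    (integrable_mul_of_continuousOn_Icc hf hK) (integrable_mul_of_continuousOn_Icc hg hK)]
    at hdiff
  have hπ : (Real.pi : ℂ) ≠ 0 := by exact_mod_cast Real.pi_ne_zero
  rw [cauchyTransform]
  linear_combination -(Real.pi : ℂ)⁻¹ / 2 * hdiff - (H ζ - H 0) * mul_inv_cancel₀ hπ +
    (Real.pi : ℂ)⁻¹ * (∫ x, √(1 - x ^ 2) * g x * ((x : ℂ) - joukowski ζ)⁻¹ ∂μI) * Complex.I_sq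

end Representation

end HerglotzBoundary

section Inversion

open Metric

variable {f g u : ℝ → ℂ} {c : ℂ}

lemma truncatedHilbert_congr_ae (h : f =ᵐ[μI] g) (t ε : ℝ) :
    truncatedHilbert f t ε = truncatedHilbert g t ε :=
  congrArg _ (integral_congr_ae (h.mul (ae_eq_refl (truncatedKernel t ε))))

lemma FHT_congr_ae (h : f =ᵐ[μI] g) : FHT f = FHT g := by
  ext t
  rw [FHT_eq_limUnder_truncatedHilbert, FHT_eq_limUnder_truncatedHilbert,
    funext (truncatedHilbert_congr_ae h t)]

lemma ae_of_ae_comp_cos {P : ℝ → Prop} (h : ∀ᵐ θ ∂μT, P (Real.cos θ)) : ∀ᵐ t ∂μI, P t := by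
  filter_upwards [quasiMeasurePreserving_arccos.ae h, ae_restrict_mem measurableSet_Ioo]
    with t ht htI
  rwa [Real.cos_arccos htI.1.le htI.2.le] at ht

lemma sign_sin_mul_sqrt_mul (g : ℝ → ℂ) (θ : ℝ) :
    Complex.I * (SignType.sign (Real.sin θ) : ℝ) * (√(1 - Real.cos θ ^ 2) * g (Real.cos θ)) =
      Complex.I * (Real.sin θ * g (Real.cos θ)) := by
  have hsign : ((SignType.sign (Real.sin θ) : ℝ) : ℂ) * (|Real.sin θ| : ℝ) = Real.sin θ := by
    exact_mod_cast sign_mul_abs (Real.sin θ)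
  rw [sqrt_one_sub_cos_sq]
  linear_combination Complex.I * g (Real.cos θ) * hsign

theorem ae_FHT_sqrt_mul_FHT (hf : Integrable f μI) (hT : Integrable (FHT f) μI) :
    ∀ᵐ t ∂μI, FHT (fun s => √(1 - s ^ 2) * FHT f s) t =
      herglotzTransform f 0 - √(1 - t ^ 2) * f t := by
  refine ae_of_ae_comp_cos ?_
  have hlim := ae_tendsto_herglotzTransform hf
  filter_upwards [hlim, ae_tendsto_cauchyTransform (integrable_sqrt_mul hT)] with θ hH hC
  have hrep : ∀ᶠ r : ℝ in 𝓝[<] 1,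
      herglotzTransform f 0 - herglotzTransform f (r * circleMap 0 1 θ) =
        cauchyTransform (fun s => √(1 - s ^ 2) * FHT f s) (joukowski (r * circleMap 0 1 θ)) := by
    filter_upwards [Ioo_mem_nhdsLT one_pos] with r hr
    rw [← neg_sub, (isSmirnov_herglotzTransform hf).sub_apply_zero_eq_neg_cauchyTransform hf hT hlim
      (ofReal_mul_circleMap_mem_ball hr θ) (ofReal_mul_circleMap_ne_zero hr.1.ne' θ), neg_neg]
  have hlim_eq := tendsto_nhds_unique hC ((hH.const_sub _).congr' hrep)
  rw [sign_sin_mul_sqrt_mul, herglotzBoundary] at hlim_eq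
  rw [sqrt_one_sub_cos_sq]
  linear_combination hlim_eq

lemma exists_isSmirnov_eq_sub_cauchyTransform (hu : Integrable u μI) (c : ℂ) :
    ∃ H, IsSmirnov H ∧
      ∀ ζ ∈ ball (0 : ℂ) 1, ζ ≠ 0 → H ζ = c - cauchyTransform u (joukowski ζ) := by
  have hsq {ζ : ℂ} (hζ : ζ ∈ ball (0 : ℂ) 1) : ‖ζ ^ 2‖ < 1 := by
    rw [norm_pow]
    exact pow_lt_one₀ (norm_nonneg ζ) (mem_ball_zero_iff.1 hζ) two_ne_zero
  have hne {ζ : ℂ} (hζ : ζ ∈ ball (0 : ℂ) 1) : 1 - ζ ^ 2 ≠ 0 :=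
    sub_ne_zero.2 fun h => by simpa [← h] using hsq hζ
  have hlin : IsSmirnov fun ζ => 2 * ζ := .of_bounded (by fun_prop) (C := 2) fun ζ hζ => by
    rw [norm_mul, Complex.norm_ofNat]
    linarith [mem_ball_zero_iff.1 hζ]
  have hinv : IsSmirnov fun ζ => (1 - ζ ^ 2)⁻¹ :=
    .of_re_nonneg (DifferentiableOn.inv (by fun_prop) fun ζ hζ => hne hζ) fun ζ hζ =>
      one_half_pos.le.trans (half_le_re_inv_one_sub (hsq hζ))
  refine ⟨_, (IsSmirnov.const c).add ((hlin.mul hinv).mul (isSmirnov_herglotzTransform hu)),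
    fun ζ hζ hζ0 => ?_⟩
  have := hne hζ
  rw [herglotzTransform_eq hζ hζ0, radialDerivJoukowski]
  field_simp
  ring

theorem FHT_ae_eq_of_sqrt_mul_eq (hf : Integrable f μI) (hg : Integrable g μI)
    (h : ∀ᵐ t ∂μI, √(1 - t ^ 2) * f t = c - FHT (fun s => √(1 - s ^ 2) * g s) t) :
    FHT f =ᵐ[μI] g := by
  obtain ⟨H, hH, hHC⟩ := exists_isSmirnov_eq_sub_cauchyTransform (integrable_sqrt_mul hg) c
  have hlim : ∀ᵐ θ ∂μT, Tendsto (fun r : ℝ => H (r * circleMap 0 1 θ)) (𝓝[<] 1)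
      (𝓝 (herglotzBoundary f g θ)) := by
    filter_upwards [ae_tendsto_cauchyTransform (integrable_sqrt_mul hg),
      quasiMeasurePreserving_cos.ae h] with θ hC hθ
    have hval : c - (FHT (fun s => √(1 - s ^ 2) * g s) (Real.cos θ) - Complex.I *
        (SignType.sign (Real.sin θ) : ℝ) * (√(1 - Real.cos θ ^ 2) * g (Real.cos θ))) =
          herglotzBoundary f g θ := by
      rw [sign_sin_mul_sqrt_mul, herglotzBoundary, ← sqrt_one_sub_cos_sq, hθ]
      ring
    rw [← hval]
    refine (hC.const_sub c).congr' ?_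
    filter_upwards [Ioo_mem_nhdsLT one_pos] with r hr
    exact (hHC _ (ofReal_mul_circleMap_mem_ball hr θ)
      (ofReal_mul_circleMap_ne_zero hr.1.ne' θ)).symm
  refine ae_of_ae_comp_cos (P := fun t => FHT f t = g t) ?_
  filter_upwards [hlim, ae_tendsto_herglotzTransform hf, ae_sin_ne_zero] with θ hθ hfθ hsin
  have hrep : ∀ᶠ r : ℝ in 𝓝[<] 1,
      H (r * circleMap 0 1 θ) = herglotzTransform f (r * circleMap 0 1 θ) := by
    filter_upwards [Ioo_mem_nhdsLT one_pos] with r hr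
    exact hH.eq_herglotzTransform hf hg hlim (ofReal_mul_circleMap_mem_ball hr θ)
      (ofReal_mul_circleMap_ne_zero hr.1.ne' θ)
  have hlim_eq := tendsto_nhds_unique hfθ (hθ.congr' hrep)
  rw [herglotzBoundary, herglotzBoundary] at hlim_eq
  have hmul := mul_left_cancel₀ Complex.I_ne_zero (add_left_cancel hlim_eq)
  exact mul_left_cancel₀ (Complex.ofReal_ne_zero.2 hsin) hmul

theorem airfoil_inversion_general (hf : Integrable f μI) (hg : Integrable g μI) :
    FHT f =ᵐ[μI] g ↔
      ∃ c : ℂ, ∀ᵐ x : ℝ ∂μI, f x = hatT g x + c / (Real.sqrt (1 - x ^ 2) : ℂ) := by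
  have hsqrt (x : ℝ) (hx : x ∈ Ioo (-1 : ℝ) 1) : (√(1 - x ^ 2) : ℂ) ≠ 0 := by
    exact_mod_cast (Real.sqrt_pos.2 (by nlinarith [hx.1, hx.2])).ne'
  constructor
  · intro h
    have hswap := ae_FHT_sqrt_mul_FHT hf (hg.congr h.symm)
    have hmul : (fun s => √(1 - s ^ 2) * FHT f s) =ᵐ[μI] fun s => (√(1 - s ^ 2) : ℂ) * g s :=
      h.mono fun s hs => congrArg (_ * ·) hs
    rw [FHT_congr_ae hmul] at hswap
    refine ⟨herglotzTransform f 0, ?_⟩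
    filter_upwards [hswap, ae_restrict_mem measurableSet_Ioo] with x hx hxI
    have := hsqrt x hxI
    rw [hatT, hx]
    field_simp
    ring
  · rintro ⟨c, h⟩
    refine FHT_ae_eq_of_sqrt_mul_eq (c := c) hf hg ?_
    filter_upwards [h, ae_restrict_mem measurableSet_Ioo] with x hx hxI
    have := hsqrt x hxI
    rw [hx, hatT]
    field_simp
    ring

end Inversion

section LogarithmicSpaces

variable {f : ℝ → ℂ}

lemma MemLlogL.integrable (h : MemLlogL f) : Integrable f μI := by
  refine ((integrable_const (Real.exp 1)).add h.2).mono' h.1 (ae_of_all _ fun x => ?_)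
  rw [Pi.add_apply]
  rcases le_or_gt ‖f x‖ (Real.exp 1) with hx | hx
  · exact hx.trans (le_add_of_nonneg_right (by positivity))
  · have hlog : 1 ≤ max (Real.log ‖f x‖) 0 :=
      le_max_of_le_left ((Real.le_log_iff_exp_le ((Real.exp_pos 1).trans hx)).2 hx.le)
    exact (le_mul_of_one_le_right (norm_nonneg _) hlog).trans
      (le_add_of_nonneg_left (Real.exp_pos 1).le)

lemma MemLlogL2.integrable (h : MemLlogL2 f) : Integrable f μI := by
  refine Integrable.mono' (h.2.const_mul ((Real.log 2 ^ 2)⁻¹)) h.1 (ae_of_all _ fun x => ?_)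
  have : 0 < Real.log 2 := Real.log_pos one_lt_two
  have hlog : Real.log 2 ≤ Real.log (2 + ‖f x‖) := Real.log_le_log two_pos (by simp)
  rw [inv_mul_eq_div, le_div_iff₀ (by positivity)]
  gcongr

end LogarithmicSpaces

/-- Inversion of the airfoil equation: if `g` is in the range of `T : L log L → L¹`, then
`f ∈ L log L` solves `T(f) = g` a.e. iff `f(x) = T̂(g)(x) + c(1-x²)^{-1/2}` a.e. for some
constant `c ∈ ℂ`; in particular this holds for every `g ∈ L(log L)²`. -/
theorem airfoil_inversion :
    (∀ g : ℝ → ℂ, IntegrableOn g (Set.Ioo (-1 : ℝ) 1) →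
      (∃ h : ℝ → ℂ, MemLlogL h ∧ FHT h =ᵐ[μI] g) →
      ∀ f : ℝ → ℂ, MemLlogL f →
        (FHT f =ᵐ[μI] g ↔
          ∃ c : ℂ, ∀ᵐ x : ℝ ∂μI,
            f x = hatT g x + c / (Real.sqrt (1 - x ^ 2) : ℂ))) ∧
    (∀ g : ℝ → ℂ, MemLlogL2 g →
      ∀ f : ℝ → ℂ, MemLlogL f →
        (FHT f =ᵐ[μI] g ↔
          ∃ c : ℂ, ∀ᵐ x : ℝ ∂μI,
            f x = hatT g x + c / (Real.sqrt (1 - x ^ 2) : ℂ))) :=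
  ⟨fun _ hg _ _ hf => airfoil_inversion_general hf.integrable hg,
    fun _ hg _ hf => airfoil_inversion_general hf.integrable hg.integrable⟩
end
end

section
/- The bounded linear operator T : LlogL(-1,1) → L^1(-1,1) given by the finite Hilbert transform is not a compact operator. -/
open MeasureTheory Set Filter

noncomputable section

/-!
Normalized in `L log L`, the indicator of `(0, d)` has height of order `1 / (d log (1/d))`. At a
point `t` to the right of `d`, its transform is in absolute value at least `1 / (π t)` times its
integral, and `∫_d^√d dt/t` is half of `log (1/d)`, which cancels the logarithm lost in the
normalization. So a fixed amount of `L¹` mass of the transform sits on `(d, √d)`. As `d → 0` this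
mass concentrates at the origin and stays away from any fixed integrable function, so no
subsequence of the transforms is Cauchy.
-/

open scoped Topology Interval

section Concentration

variable {α ι E : Type*} [MeasurableSpace α] {μ : Measure α} [NormedAddCommGroup E]

lemma eventually_lt_integral_norm_sub_of_concentrating {l : Filter ι} {h : α → E} {g : ι → α → E}
    {A : ι → Set α} {b c : ℝ} (hh : Integrable h μ) (hg : ∀ᶠ i in l, Integrable (g i) μ)
    (hA : Tendsto (fun i => μ (A i)) l (𝓝 0)) (hbc : b < c)
    (hc : ∀ᶠ i in l, c ≤ ∫ x in A i, ‖g i x‖ ∂μ) :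
    ∀ᶠ i in l, b < ∫ x, ‖h x - g i x‖ ∂μ := by
  have h_small : ∀ᶠ i in l, ∫ x in A i, ‖h x‖ ∂μ < c - b :=
    (hh.norm.tendsto_setIntegral_nhds_zero hA).eventually_lt_const (sub_pos.2 hbc)
  filter_upwards [hg, hc, h_small] with i hgi hci hhi
  calc b < (∫ x in A i, ‖g i x‖ ∂μ) - ∫ x in A i, ‖h x‖ ∂μ := by linarith
    _ = ∫ x in A i, (‖g i x‖ - ‖h x‖) ∂μ :=
        (integral_sub hgi.norm.integrableOn hh.norm.integrableOn).symm
    _ ≤ ∫ x in A i, ‖h x - g i x‖ ∂μ :=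
        integral_mono (hgi.norm.sub hh.norm).integrableOn (hh.sub hgi).norm.integrableOn
          fun x => (norm_sub_norm_le _ _).trans_eq (norm_sub_rev _ _)
    _ ≤ ∫ x, ‖h x - g i x‖ ∂μ :=
        setIntegral_le_integral (hh.sub hgi).norm (ae_of_all _ fun _ => norm_nonneg _)

end Concentration

section ZygmundNorm

variable {E : Set ℝ} {t : ℝ}

lemma memLlogL_indicator_const (hE : MeasurableSet E) (a : ℂ) :
    MemLlogL (E.indicator fun _ => a) := by
  refine ⟨(measurable_const.indicator hE).aestronglyMeasurable, ?_⟩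
  have h_integrand :
      (fun x => ‖E.indicator (fun _ => a) x‖ * max (Real.log ‖E.indicator (fun _ => a) x‖) 0)
        = E.indicator fun _ => ‖a‖ * max (Real.log ‖a‖) 0 := by
    ext x
    by_cases hx : x ∈ E <;> simp [hx]
  rw [h_integrand]
  exact (integrableOn_const (by simp)).indicator hE

lemma distFun_indicator_const (hE : E ⊆ Ioo (-1) 1) (a : ℂ) {l : ℝ} (hl : 0 ≤ l) :
    distFun (E.indicator fun _ => a) l = if l < ‖a‖ then volume.real E else 0 := by
  have h_level : {x | x ∈ Ioo (-1 : ℝ) 1 ∧ l < ‖E.indicator (fun _ => a) x‖}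
      = if l < ‖a‖ then E else ∅ := by
    ext x
    by_cases hx : x ∈ E
    · by_cases hla : l < ‖a‖ <;> simp [hx, hla, -mem_Ioo, hE hx]
    · by_cases hla : l < ‖a‖ <;> simp [hx, hla, hl]
  rw [distFun, h_level]
  split_ifs <;> simp [measureReal_def]

lemma decRearr_indicator_const (hE : E ⊆ Ioo (-1) 1) (a : ℂ) (ht : 0 ≤ t) :
    decRearr (E.indicator fun _ => a) t = (Iio (volume.real E)).indicator (fun _ => ‖a‖) t := by
  have h_levels : {l | 0 ≤ l ∧ distFun (E.indicator fun _ => a) l ≤ t}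
      = Ici ((Iio (volume.real E)).indicator (fun _ => ‖a‖) t) := by
    ext l
    have ha := norm_nonneg a
    simp only [mem_ofPred_eq, mem_Ici, indicator_apply, mem_Iio]
    constructor
    · rintro ⟨hl, hlt⟩
      rw [distFun_indicator_const hE a hl] at hlt
      grind
    · intro hl
      have hl0 : 0 ≤ l := by grind
      rw [distFun_indicator_const hE a hl0]
      grind
  rw [decRearr, h_levels, csInf_Ici]

lemma llogLNorm_indicator_const (hE : E ⊆ Ioo (-1) 1) (a : ℂ) :
    llogLNorm (E.indicator fun _ => a)
      = ‖a‖ * (volume.real E * (Real.log 2 + 2 - Real.log (volume.real E))) := by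
  set δ := volume.real E
  have hδ : δ ≤ 2 := by
    refine (measureReal_mono hE (by simp)).trans_eq ?_
    norm_num [measureReal_def]
  have h_integrand : EqOn
      (fun t => decRearr (E.indicator fun _ => a) t * Real.log (2 * Real.exp 1 / t))
      ((Iio δ).indicator fun t => ‖a‖ * (Real.log 2 + 1 - Real.log t)) (Ioo 0 2) := by
    intro t ht
    have h_log : Real.log (2 * Real.exp 1 / t) = Real.log 2 + 1 - Real.log t := by
      rw [Real.log_div (by positivity) ht.1.ne', Real.log_mul two_ne_zero (Real.exp_ne_zero 1),
        Real.log_exp]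
    simp only [decRearr_indicator_const hE a ht.1.le, h_log, indicator_apply, ite_mul, zero_mul, δ]
  have h_inter : Ioo (0 : ℝ) 2 ∩ Iio δ = Ioo 0 δ := by
    rw [Ioo_inter_Iio, min_eq_right hδ]
  rw [llogLNorm, setIntegral_congr_fun measurableSet_Ioo h_integrand,
    setIntegral_indicator measurableSet_Iio, h_inter, ← integral_Ioc_eq_integral_Ioo,
    ← intervalIntegral.integral_of_le measureReal_nonneg, intervalIntegral.integral_const_mul,
    intervalIntegral.integral_sub intervalIntegrable_const intervalIntegral.intervalIntegrable_log',
    intervalIntegral.integral_const, integral_log, smul_eq_mul]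
  ring

end ZygmundNorm

section PrincipalValue

variable {c d t : ℝ}

lemma integral_inv_sub (h : t ∉ [[c, d]]) :
    ∫ x in c..d, (x - t)⁻¹ = Real.log ((d - t) / (c - t)) := by
  rw [intervalIntegral.integral_comp_sub_right (fun x => x⁻¹) t]
  refine integral_inv fun h0 => h ?_
  simpa [mem_uIcc, sub_nonneg, sub_nonpos] using h0

lemma intervalIntegrable_inv_sub (h : t ∉ [[c, d]]) :
    IntervalIntegrable (fun x => (x - t)⁻¹) volume c d := by
  refine ContinuousOn.intervalIntegrable (ContinuousOn.inv₀ (by fun_prop) fun x hx h0 => h ?_)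
  rwa [← sub_eq_zero.1 h0]

lemma eventually_truncated_integral_inv_sub_of_notMem (hcd : c ≤ d) (ht : t ∉ Icc c d) :
    ∀ᶠ ε in 𝓝[>] (0 : ℝ),
      ∫ x in Ioo c d ∩ {x | ε ≤ |x - t|}, (x - t)⁻¹ = Real.log ((d - t) / (c - t)) := by
  obtain ⟨r, hr, hrt⟩ : ∃ r > 0, ∀ x ∈ Icc c d, r ≤ |x - t| := by
    obtain ⟨r, hr, h_ball⟩ := Metric.isOpen_iff.1 isClosed_Icc.isOpen_compl t ht
    exact ⟨r, hr, fun x hx => not_lt.1 fun h => h_ball h hx⟩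
  filter_upwards [Ioo_mem_nhdsGT hr] with ε hε
  have h_set : Ioo c d ∩ {x | ε ≤ |x - t|} = Ioo c d :=
    inter_eq_left.2 fun x hx => hε.2.le.trans (hrt x (Ioo_subset_Icc_self hx))
  rw [h_set, ← integral_Ioc_eq_integral_Ioo, ← intervalIntegral.integral_of_le hcd,
    integral_inv_sub (by rwa [uIcc_of_le hcd])]

lemma Ioo_inter_le_abs_sub_eq_union {ε : ℝ} (h_left : t - ε < d) (h_right : c < t + ε) :
    Ioo c d ∩ {x | ε ≤ |x - t|} = Ioc c (t - ε) ∪ Ico (t + ε) d := by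
  ext x
  simp only [mem_inter_iff, mem_ofPred_eq, mem_union, mem_Ioo, mem_Ioc, mem_Ico, le_abs]
  grind

lemma eventually_truncated_integral_inv_sub_of_mem (ht : t ∈ Ioo c d) :
    ∀ᶠ ε in 𝓝[>] (0 : ℝ),
      ∫ x in Ioo c d ∩ {x | ε ≤ |x - t|}, (x - t)⁻¹ = Real.log ((d - t) / (c - t)) := by
  have hct : c - t < 0 := sub_neg.2 ht.1
  have htd : 0 < d - t := sub_pos.2 ht.2
  filter_upwards [Ioo_mem_nhdsGT (lt_min (sub_pos.2 ht.1) htd)] with ε ⟨hε, hε_lt⟩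
  obtain ⟨hεc, hεd⟩ := lt_min_iff.1 hε_lt
  have h_disj : Disjoint (Ioc c (t - ε)) (Ico (t + ε) d) :=
    disjoint_left.2 fun x hx hx' => by linarith [hx.2, hx'.1]
  have h_le_left : c ≤ t - ε := by linarith
  have h_le_right : t + ε ≤ d := by linarith
  have h_left : t ∉ [[c, t - ε]] := by
    rw [uIcc_of_le h_le_left]
    exact fun h => by linarith [h.2]
  have h_right : t ∉ [[t + ε, d]] := by
    rw [uIcc_of_le h_le_right]
    exact fun h => by linarith [h.1]
  -- The two logarithms of `ε` cancel, so the truncated integral already equals its limit.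
  calc ∫ x in Ioo c d ∩ {x | ε ≤ |x - t|}, (x - t)⁻¹
      = (∫ x in Ioc c (t - ε), (x - t)⁻¹) + ∫ x in Ico (t + ε) d, (x - t)⁻¹ := by
        rw [Ioo_inter_le_abs_sub_eq_union (by linarith) (by linarith)]
        exact setIntegral_union h_disj measurableSet_Ico
          ((intervalIntegrable_iff_integrableOn_Ioc_of_le h_le_left).1
            (intervalIntegrable_inv_sub h_left))
          ((intervalIntegrable_iff_integrableOn_Ico_of_le h_le_right).1
            (intervalIntegrable_inv_sub h_right))
    _ = (∫ x in c..(t - ε), (x - t)⁻¹) + ∫ x in (t + ε)..d, (x - t)⁻¹ := by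
        rw [intervalIntegral.integral_of_le h_le_left, intervalIntegral.integral_of_le h_le_right,
          integral_Ico_eq_integral_Ioo, integral_Ioc_eq_integral_Ioo (x := t + ε)]
    _ = Real.log (ε / (c - t)) + Real.log ((d - t) / ε) := by
        rw [integral_inv_sub h_left, integral_inv_sub h_right, sub_sub_cancel_left,
          add_sub_cancel_left, neg_div, Real.log_neg_eq_log]
    _ = Real.log ((d - t) / (c - t)) := by
        rw [← Real.log_mul (div_ne_zero hε.ne' hct.ne) (div_ne_zero htd.ne' hε.ne'),
          div_mul_div_comm, mul_comm ε, mul_div_mul_right _ _ hε.ne']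

lemma eventually_truncated_integral_inv_sub (hcd : c ≤ d) (htc : t ≠ c) (htd : t ≠ d) :
    ∀ᶠ ε in 𝓝[>] (0 : ℝ),
      ∫ x in Ioo c d ∩ {x | ε ≤ |x - t|}, (x - t)⁻¹ = Real.log ((d - t) / (c - t)) := by
  by_cases ht : t ∈ Icc c d
  · exact eventually_truncated_integral_inv_sub_of_mem
      ⟨lt_of_le_of_ne ht.1 htc.symm, lt_of_le_of_ne ht.2 htd⟩
  · exact eventually_truncated_integral_inv_sub_of_notMem hcd ht

end PrincipalValue

section TransformOfInterval

variable {c d : ℝ}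

lemma FHT_indicator_Ioo_const {t : ℝ} (hc : -1 ≤ c) (hcd : c ≤ d) (hd : d ≤ 1) (a : ℂ)
    (htc : t ≠ c) (htd : t ≠ d) :
    FHT ((Ioo c d).indicator fun _ => a) t
      = a * (Real.pi⁻¹ * Real.log ((d - t) / (c - t)) : ℝ) := by
  refine Tendsto.limUnder_eq (tendsto_const_nhds.congr' ?_)
  filter_upwards [eventually_truncated_integral_inv_sub hcd htc htd] with ε hε
  have h_integrand : (fun x : ℝ => (Ioo c d).indicator (fun _ => a) x / ((x : ℂ) - t))
      = (Ioo c d).indicator fun x => a * ((x - t)⁻¹ : ℝ) := by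
    ext x
    by_cases hx : x ∈ Ioo c d <;> simp [hx, -mem_Ioo, div_eq_mul_inv]
  have h_set : {x | x ∈ Ioo (-1 : ℝ) 1 ∧ ε ≤ |x - t|} ∩ Ioo c d
      = Ioo c d ∩ {x | ε ≤ |x - t|} := by
    ext x
    have h_sub : x ∈ Ioo c d → x ∈ Ioo (-1 : ℝ) 1 := fun hx => Ioo_subset_Ioo hc hd hx
    simp only [mem_inter_iff, mem_ofPred_eq]
    tauto
  rw [h_integrand, setIntegral_indicator measurableSet_Ioo, h_set, integral_const_mul,
    integral_complex_ofReal, hε]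
  push_cast
  ring

lemma integrable_FHT_indicator_Ioo_const (hc : -1 ≤ c) (hcd : c ≤ d) (hd : d ≤ 1) (a : ℂ) :
    Integrable (FHT ((Ioo c d).indicator fun _ => a)) μI := by
  have h_log (p : ℝ) : Integrable (fun t => Real.log (p - t)) μI := by
    have h := (intervalIntegral.intervalIntegrable_log'
      (a := p - -1) (b := p - 1)).comp_sub_left p
    simp only [sub_sub_cancel] at h
    exact (intervalIntegrable_iff_integrableOn_Ioo_of_le (by norm_num)).1 h
  refine (((((h_log d).sub (h_log c)).const_mul Real.pi⁻¹).ofReal (𝕜 := ℂ)).const_mul a).congr ?_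
  refine ae_restrict_of_ae ?_
  filter_upwards [Measure.ae_ne volume c, Measure.ae_ne volume d] with t htc htd
  rw [FHT_indicator_Ioo_const hc hcd hd a htc htd,
    Real.log_div (sub_ne_zero.2 htd.symm) (sub_ne_zero.2 htc.symm)]
  rfl

lemma le_norm_FHT_indicator_Ioo_const {t : ℝ} (hc : -1 ≤ c) (hcd : c ≤ d) (hd : d ≤ 1) (a : ℂ)
    (hdt : d < t) :
    ‖a‖ * (d - c) / Real.pi * (t - c)⁻¹ ≤ ‖FHT ((Ioo c d).indicator fun _ => a) t‖ := by
  have h_ratio : 0 < (d - t) / (c - t) := div_pos_of_neg_of_neg (by linarith) (by linarith)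
  have h_log : (d - c) * (t - c)⁻¹ ≤ |Real.log ((d - t) / (c - t))| := by
    have h_sub : (d - t) / (c - t) - 1 = -((d - c) * (t - c)⁻¹) := by grind
    linarith [Real.log_le_sub_one_of_pos h_ratio, neg_le_abs (Real.log ((d - t) / (c - t)))]
  rw [FHT_indicator_Ioo_const hc hcd hd a (by linarith) hdt.ne', norm_mul, Complex.norm_real,
    Real.norm_eq_abs, abs_mul, abs_of_pos (inv_pos.2 Real.pi_pos)]
  calc ‖a‖ * (d - c) / Real.pi * (t - c)⁻¹
      = ‖a‖ * (Real.pi⁻¹ * ((d - c) * (t - c)⁻¹)) := by ring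
    _ ≤ ‖a‖ * (Real.pi⁻¹ * |Real.log ((d - t) / (c - t))|) := by gcongr

lemma le_setIntegral_norm_FHT_indicator_Ioo_const {s : ℝ} (hc : -1 ≤ c) (hcd : c < d)
    (hds : d ≤ s) (hs : s ≤ 1) (a : ℂ) :
    ‖a‖ * (d - c) / Real.pi * Real.log ((s - c) / (d - c))
      ≤ ∫ t in Ioo d s, ‖FHT ((Ioo c d).indicator fun _ => a) t‖ ∂μI := by
  have hc_notMem : c ∉ [[d, s]] := by
    rw [uIcc_of_le hds]
    exact fun h => hcd.not_ge h.1
  have h_restrict : μI.restrict (Ioo d s) = volume.restrict (Ioo d s) :=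
    Measure.restrict_restrict_of_subset (Ioo_subset_Ioo (by linarith) hs)
  have h_transform := integrable_FHT_indicator_Ioo_const hc hcd.le (hds.trans hs) a
  rw [← integral_inv_sub hc_notMem, intervalIntegral.integral_of_le hds,
    integral_Ioc_eq_integral_Ioo, ← integral_const_mul, ← h_restrict]
  refine setIntegral_mono_on (Integrable.const_mul ?_ _) h_transform.norm.integrableOn
    measurableSet_Ioo fun t ht =>
      le_norm_FHT_indicator_Ioo_const hc hcd.le (hds.trans hs) a ht.1
  rw [h_restrict]
  exact (intervalIntegrable_iff_integrableOn_Ioo_of_le hds).1 (intervalIntegrable_inv_sub hc_notMem)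

end TransformOfInterval

section UnitBump

variable {d : ℝ}

lemma log_two_add_two_sub_log_pos (hd0 : 0 ≤ d) (hd1 : d ≤ 1) :
    0 < Real.log 2 + 2 - Real.log d := by
  linarith [Real.log_nonpos hd0 hd1, Real.log_pos one_lt_two]

/-- The reciprocal of the `L log L` norm of the indicator of `(0, d)`, for `0 < d ≤ 1`. -/
def unitBumpHeight (d : ℝ) : ℝ :=
  (d * (Real.log 2 + 2 - Real.log d))⁻¹

/-- The multiple of the indicator of `(0, d)` which, for `0 < d ≤ 1`, has norm `1` in `L log L`. -/
def unitBump (d : ℝ) : ℝ → ℂ :=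
  (Ioo 0 d).indicator fun _ => (unitBumpHeight d : ℂ)

lemma norm_unitBumpHeight (hd0 : 0 ≤ d) (hd1 : d ≤ 1) :
    ‖(unitBumpHeight d : ℂ)‖ = unitBumpHeight d :=
  Complex.norm_of_nonneg
    (inv_nonneg.2 (mul_nonneg hd0 (log_two_add_two_sub_log_pos hd0 hd1).le))

lemma memLlogL_unitBump (d : ℝ) : MemLlogL (unitBump d) :=
  memLlogL_indicator_const measurableSet_Ioo _

lemma llogLNorm_unitBump (hd0 : 0 < d) (hd1 : d ≤ 1) : llogLNorm (unitBump d) = 1 := by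
  rw [unitBump, llogLNorm_indicator_const (Ioo_subset_Ioo (by norm_num) hd1),
    norm_unitBumpHeight hd0.le hd1, Real.volume_real_Ioo_of_le hd0.le, sub_zero]
  exact inv_mul_cancel₀ (mul_pos hd0 (log_two_add_two_sub_log_pos hd0.le hd1)).ne'

lemma integrable_FHT_unitBump (hd0 : 0 ≤ d) (hd1 : d ≤ 1) : Integrable (FHT (unitBump d)) μI :=
  integrable_FHT_indicator_Ioo_const (by norm_num) hd0 hd1 _

lemma le_setIntegral_norm_FHT_unitBump (hd0 : 0 < d) (hd : d ≤ Real.exp (-3)) :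
    1 / (4 * Real.pi) ≤ ∫ t in Ioo d (√d), ‖FHT (unitBump d) t‖ ∂μI := by
  have hd1 : d ≤ 1 := hd.trans (Real.exp_le_one_iff.2 (by norm_num))
  have h_log : Real.log d ≤ -3 := (Real.log_le_iff_le_exp hd0).2 hd
  have h_log_two : Real.log 2 ≤ 1 := by linarith [Real.log_two_lt_d9]
  have h_den := log_two_add_two_sub_log_pos hd0.le hd1
  have h_ratio : 1 / 4 ≤ (-Real.log d / 2) / (Real.log 2 + 2 - Real.log d) := by
    rw [le_div_iff₀ h_den]
    linarith
  refine le_trans ?_ (le_setIntegral_norm_FHT_indicator_Ioo_const (by norm_num) hd0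
    (Real.le_sqrt_of_sq_le (pow_le_of_le_one hd0.le hd1 two_ne_zero)) (Real.sqrt_le_one.2 hd1) _)
  rw [norm_unitBumpHeight hd0.le hd1, sub_zero, sub_zero,
    Real.log_div (Real.sqrt_pos.2 hd0).ne' hd0.ne', Real.log_sqrt hd0.le]
  calc 1 / (4 * Real.pi) = 1 / 4 / Real.pi := by ring
    _ ≤ (-Real.log d / 2) / (Real.log 2 + 2 - Real.log d) / Real.pi := by gcongr
    _ = unitBumpHeight d * d / Real.pi * (Real.log d / 2 - Real.log d) := by
      rw [unitBumpHeight]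
      field_simp
      ring

lemma tendsto_μI_Ioo_self_sqrt : Tendsto (fun d => μI (Ioo d (√d))) (𝓝[>] 0) (𝓝 0) := by
  have h_length : Tendsto (fun d => ENNReal.ofReal (√d - d)) (𝓝[>] 0) (𝓝 0) := by
    have h_cont : Continuous fun d => ENNReal.ofReal (√d - d) :=
      ENNReal.continuous_ofReal.comp (by fun_prop)
    simpa using (h_cont.tendsto 0).mono_left nhdsWithin_le_nhds
  refine tendsto_of_tendsto_of_tendsto_of_le_of_le tendsto_const_nhds h_length
    (fun _ => zero_le) fun d => ?_
  exact (Measure.restrict_apply_le _ _).trans_eq Real.volume_Ioo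

lemma eventually_lt_integral_norm_sub_FHT_unitBump {h : ℝ → ℂ} (hh : Integrable h μI) :
    ∀ᶠ d in 𝓝[>] 0, 1 / (8 * Real.pi) < ∫ x, ‖h x - FHT (unitBump d) x‖ ∂μI := by
  refine eventually_lt_integral_norm_sub_of_concentrating hh ?_ tendsto_μI_Ioo_self_sqrt
    (c := 1 / (4 * Real.pi)) ?_ ?_
  · filter_upwards [Ioc_mem_nhdsGT one_pos] with d hd using integrable_FHT_unitBump hd.1.le hd.2
  · gcongr
    norm_num
  · filter_upwards [Ioc_mem_nhdsGT (Real.exp_pos (-3))] with d hd using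
      le_setIntegral_norm_FHT_unitBump hd.1 hd.2

end UnitBump

/-- `T : L log L(-1,1) → L¹(-1,1)` is not compact: it is not the case that every sequence
in the unit ball of `L log L` has a subsequence whose image under `T` is Cauchy in `L¹`. -/
theorem FHT_not_compact :
    ¬ ∀ f : ℕ → ℝ → ℂ,
        (∀ n, MemLlogL (f n)) → (∀ n, llogLNorm (f n) ≤ 1) →
        ∃ φ : ℕ → ℕ, StrictMono φ ∧
          ∀ ε : ℝ, 0 < ε → ∃ N : ℕ, ∀ m ≥ N, ∀ n ≥ N,
            ∫ x in Set.Ioo (-1 : ℝ) 1, ‖FHT (f (φ m)) x - FHT (f (φ n)) x‖ < ε := by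
  intro h_compact
  set d : ℕ → ℝ := fun n => 1 / ((n : ℝ) + 1)
  have hd0 (n : ℕ) : 0 < d n := Nat.one_div_pos_of_nat
  have hd1 (n : ℕ) : d n ≤ 1 := (div_le_one (by positivity)).2 (by simp)
  have hd_lim : Tendsto d atTop (𝓝[>] 0) :=
    tendsto_nhdsWithin_iff.2
      ⟨tendsto_one_div_add_atTop_nhds_zero_nat, Eventually.of_forall hd0⟩
  obtain ⟨φ, hφ, h_cauchy⟩ := h_compact (fun n => unitBump (d n)) (fun n => memLlogL_unitBump (d n))
    fun n => (llogLNorm_unitBump (hd0 n) (hd1 n)).le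
  obtain ⟨N, hN⟩ := h_cauchy (1 / (8 * Real.pi)) (by positivity)
  have h_far := (hd_lim.comp hφ.tendsto_atTop).eventually
    (eventually_lt_integral_norm_sub_FHT_unitBump
      (integrable_FHT_unitBump (hd0 (φ N)).le (hd1 (φ N))))
  obtain ⟨n, hn_far, hn⟩ := (h_far.and (eventually_ge_atTop N)).exists
  exact (hN N le_rfl n hn).not_gt hn_far
end
end
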